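/- Let η_n → η in Wasserstein-1 distance in the space of probability measures on ℝ with finite first moments, let H_n → ∞, let υ be a finite positive measure, and assume η_n ≤_{c,+} H_n·υ for every n. Then S^{H_n υ}(η_n) → ηP_T in Wasserstein-1 distance, and supp(η) ⊆ [inf T, sup T], where T = supp(υ) and P_T is the Kellerer dilation onto T. -/

import Mathlib

open MeasureTheory
open scoped Classical

/-- The support of a measure on a topological space. -/
def msupport {α : Type*} [TopologicalSpace α] [MeasurableSpace α] (μ : Measure α) : Set α :=
  {x | ∀ U : Set α, IsOpen U → x ∈ U → 0 < μ U}

/-- The Kellerer dilation onto a closed set `T`: the point mass at `x` if `x ∈ T`, and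
otherwise the two-point martingale measure on the nearest points of `T` below and above `x`. -/

noncomputable def kellererDilation (T : Set ℝ) (x : ℝ) : Measure ℝ :=
  if x ∈ T then Measure.dirac x
  else
    ENNReal.ofReal ((sInf (T ∩ Set.Ici x) - x) / (sInf (T ∩ Set.Ici x) - sSup (T ∩ Set.Iic x))) •
        Measure.dirac (sSup (T ∩ Set.Iic x)) +
      ENNReal.ofReal ((x - sSup (T ∩ Set.Iic x)) / (sInf (T ∩ Set.Ici x) - sSup (T ∩ Set.Iic x))) •
        Measure.dirac (sInf (T ∩ Set.Ici x))

open MeasureTheory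

/-- Convex order on finite measures: `∫ φ dμ ≤ ∫ φ dν` for every convex `φ` for which
both integrals exist. -/
def ConvexOrder (μ ν : Measure ℝ) : Prop :=
  ∀ φ : ℝ → ℝ, ConvexOn ℝ Set.univ φ → Integrable φ μ → Integrable φ ν →
    ∫ x, φ x ∂μ ≤ ∫ x, φ x ∂ν

/-- `μ ≤_{c,+} ν`: there exists `η` with `μ ≤_c η` and `η ≤ ν` setwise. -/
def ConvexPlusOrder (μ ν : Measure ℝ) : Prop :=
  ∃ η : Measure ℝ, ConvexOrder μ η ∧ η ≤ ν

/-- `η` is the shadow of `μ` in `ν`: the `≤_c`-smallest measure `η` with `μ ≤_c η`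
and `η ≤ ν`. -/
def IsShadow (μ ν η : Measure ℝ) : Prop :=
  ConvexOrder μ η ∧ η ≤ ν ∧
    ∀ η' : Measure ℝ, ConvexOrder μ η' → η' ≤ ν → ConvexOrder η η'

noncomputable def W1 (μ ν : Measure ℝ) : ℝ :=
  ⨆ f : {f : ℝ → ℝ // LipschitzWith 1 f},
    |∫ x, (f : ℝ → ℝ) x ∂μ - ∫ x, (f : ℝ → ℝ) x ∂ν|

/-!
A measure `μ` is encoded by its put potential `P_μ t = ∫ (t - x)⁺ dμ(x)`, a convex function whose
right derivative is `μ (-∞, t]`. Among measures of equal mass and barycentre the convex order is the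
pointwise order of the potentials, and the shadow `S` of `η` in `ν` has potential
`P_ν - conv (P_ν - P_η)`, where `conv` denotes the convex envelope.

Let `t ∈ T = supp υ`. Since `H_n υ` puts arbitrarily large mass on every neighbourhood of `t`, the
potential of `ν = H_n υ` bends so sharply near `t` that `P_ν - P_η` has an affine minorant almost
touching it at `t`; hence `P_S t - P_η t → 0`. Between neighbouring points of `T` the potential of a
measure carried by `T` is affine, and outside `[inf T, sup T]` it is determined by the barycentre,
so the values on `T` determine the limit everywhere. They are those of `η P_T`, because the Kellerer
dilation moves mass only across gaps of `T` and the functions `(t - x)⁺`, `t ∈ T`, are affine there.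
Finally, convergence of potentials and barycentres implies convergence in Wasserstein distance, by
interpolating Lipschitz functions piecewise affinely.
-/

open Set Filter Topology

/-! ### Right derivatives of convex functions -/

/-- The right derivative of a real function, with the junk value `0` where it does not exist.
For a convex function it exists everywhere, and is the distribution function of the measure
`f''`. -/
noncomputable def rightDeriv (f : ℝ → ℝ) (x : ℝ) : ℝ := derivWithin f (Ioi x) x

lemma rightDeriv_eq_of_hasDerivWithinAt {f : ℝ → ℝ} {d x : ℝ}
    (h : HasDerivWithinAt f d (Ici x) x) : rightDeriv f x = d :=
  h.Ioi_of_Ici.derivWithin (uniqueDiffWithinAt_Ioi x)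

lemma continuous_of_convexOn_univ {f : ℝ → ℝ} (hf : ConvexOn ℝ univ f) : Continuous f :=
  continuousOn_univ.1 (hf.continuousOn isOpen_univ)

section Convex

variable {f : ℝ → ℝ} (hf : ConvexOn ℝ univ f)
include hf

lemma hasDerivWithinAt_rightDeriv (x : ℝ) : HasDerivWithinAt f (rightDeriv f x) (Ici x) x :=
  hasDerivWithinAt_Ioi_iff_Ici.1 (hf.hasDerivWithinAt_rightDeriv_of_mem_interior (by simp))

lemma monotone_rightDeriv : Monotone (rightDeriv f) :=
  monotoneOn_univ.1 (hf.monotoneOn_rightDeriv.mono (by simp))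

lemma rightDeriv_le_slope {x y : ℝ} (hxy : x < y) : rightDeriv f x ≤ slope f x y :=
  hf.rightDeriv_le_slope_of_mem_interior (by simp) (by simp) hxy

lemma slope_le_rightDeriv {x y : ℝ} (hxy : x < y) : slope f x y ≤ rightDeriv f y :=
  (hf.slope_le_leftDeriv_of_mem_interior (by simp) (by simp) hxy).trans
    (hf.leftDeriv_le_rightDeriv_of_mem_interior (by simp))

lemma add_rightDeriv_mul_sub_le (x y : ℝ) : f x + rightDeriv f x * (y - x) ≤ f y := by
  rcases lt_trichotomy x y with hxy | rfl | hyx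
  · have h := rightDeriv_le_slope hf hxy
    rw [slope_def_field, le_div_iff₀ (by linarith)] at h
    linarith
  · simp
  · have h := slope_le_rightDeriv hf hyx
    rw [slope_def_field, div_le_iff₀ (by linarith)] at h
    linarith

lemma continuousWithinAt_rightDeriv (x : ℝ) : ContinuousWithinAt (rightDeriv f) (Ici x) x := by
  rw [← continuousWithinAt_Ioi_iff_Ici]
  refine tendsto_order.2 ⟨fun a ha => ?_, fun a ha => ?_⟩
  · filter_upwards [self_mem_nhdsWithin] with s hs
    exact ha.trans_le (monotone_rightDeriv hf (le_of_lt hs))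
  -- A slope `slope f x y < a` stays below `a` when `x` is moved slightly to the right.
  · have hslope : Tendsto (slope f x) (𝓝[>] x) (𝓝 (rightDeriv f x)) :=
      (hasDerivWithinAt_iff_tendsto_slope' (by simp)).1
        (hasDerivWithinAt_rightDeriv hf x).Ioi_of_Ici
    obtain ⟨y, hya, hxy : x < y⟩ :=
      ((hslope.eventually_lt_const ha).and self_mem_nhdsWithin).exists
    have hcont : ContinuousAt (fun s => slope f s y) x := by
      simp only [slope_def_field]
      exact (continuousAt_const.sub (continuous_of_convexOn_univ hf).continuousAt).div
        (continuousAt_const.sub continuousAt_id) (sub_ne_zero.2 hxy.ne')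
    filter_upwards [(hcont.mono_left nhdsWithin_le_nhds).eventually_lt_const hya,
      Ioo_mem_nhdsGT hxy] with s hsa hs
    exact (rightDeriv_le_slope hf hs.2).trans_lt hsa

end Convex

section Subgradient

variable {f d : ℝ → ℝ} (h : ∀ x y, f x + d x * (y - x) ≤ f y)
include h

lemma convexOn_of_subgradient : ConvexOn ℝ univ f := by
  refine ⟨convex_univ, fun x _ y _ a b ha hb hab => ?_⟩
  simp only [smul_eq_mul]
  set z := a * x + b * y with hz
  calc f z = a * (f z + d z * (x - z)) + b * (f z + d z * (y - z)) := by
        linear_combination (d z * z - f z) * hab + d z * hz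
    _ ≤ a * f x + b * f y :=
        add_le_add (mul_le_mul_of_nonneg_left (h z x) ha) (mul_le_mul_of_nonneg_left (h z y) hb)

lemma hasDerivWithinAt_of_subgradient {x : ℝ} (hd : ContinuousWithinAt d (Ici x) x) :
    HasDerivWithinAt f (d x) (Ici x) x := by
  rw [← hasDerivWithinAt_Ioi_iff_Ici, hasDerivWithinAt_iff_tendsto_slope' (by simp)]
  refine tendsto_of_tendsto_of_tendsto_of_le_of_le' tendsto_const_nhds
    (continuousWithinAt_Ioi_iff_Ici.2 hd) ?_ ?_ <;>
  filter_upwards [self_mem_nhdsWithin] with y (hxy : x < y)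
  · rw [slope_def_field, le_div_iff₀ (by linarith)]
    linarith [h x y]
  · rw [slope_def_field, div_le_iff₀ (by linarith)]
    linarith [h y x]

end Subgradient

lemma sub_eq_sub_add_mul_of_hasDerivWithinAt {f g f' g' : ℝ → ℝ} {a b c : ℝ} (hab : a ≤ b)
    (hf : ContinuousOn f (Icc a b)) (hg : ContinuousOn g (Icc a b))
    (hf' : ∀ x ∈ Ico a b, HasDerivWithinAt f (f' x) (Ici x) x)
    (hg' : ∀ x ∈ Ico a b, HasDerivWithinAt g (g' x) (Ici x) x)
    (h : ∀ x ∈ Ico a b, f' x = g' x + c) : f b - f a = g b - g a + c * (b - a) := by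
  have hconst := constant_of_has_deriv_right_zero (f := fun x => f x - g x - c * x)
    ((hf.sub hg).sub (by fun_prop)) (fun x hx => by
      convert! ((hf' x hx).sub (hg' x hx)).sub ((hasDerivWithinAt_id x (Ici x)).const_mul c) using 1
      rw [h x hx]
      ring)
    b (right_mem_Icc.2 hab)
  linarith

lemma eq_zero_of_tendsto_affine {l : Filter ℝ} [l.NeBot] (hl : Tendsto (· + 1) l l) {c k : ℝ}
    (h : Tendsto (fun t => c * t + k) l (𝓝 0)) : c = 0 ∧ k = 0 := by
  have hc : c = 0 := by
    refine tendsto_nhds_unique (tendsto_const_nhds (f := l)) ?_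
    simpa only [Function.comp_def, sub_zero, mul_add, mul_one, add_sub_add_right_eq_sub,
      add_sub_cancel_left] using (h.comp hl).sub h
  subst hc
  exact ⟨rfl, tendsto_nhds_unique (tendsto_const_nhds (f := l)) (by simpa using h)⟩

/-- The Stieltjes function of a convex function: its measure is the second derivative of `f` in
the sense of distributions. -/
noncomputable def convexStieltjes (f : ℝ → ℝ) (hf : ConvexOn ℝ univ f) : StieltjesFunction ℝ where
  toFun := rightDeriv f
  mono' := monotone_rightDeriv hf
  right_continuous' := continuousWithinAt_rightDeriv hf

lemma convexStieltjes_measureReal_Ioc {f : ℝ → ℝ} (hf : ConvexOn ℝ univ f) {a b : ℝ} (hab : a ≤ b) :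
    (convexStieltjes f hf).measure.real (Ioc a b) = rightDeriv f b - rightDeriv f a := by
  rw [Measure.real, StieltjesFunction.measure_Ioc,
    ENNReal.toReal_ofReal (sub_nonneg.2 ((convexStieltjes f hf).mono hab))]
  rfl

lemma convexStieltjes_add {f g : ℝ → ℝ} (hf : ConvexOn ℝ univ f) (hg : ConvexOn ℝ univ g) :
    convexStieltjes (f + g) (hf.add hg) = convexStieltjes f hf + convexStieltjes g hg := by
  ext x
  exact rightDeriv_eq_of_hasDerivWithinAt
    ((hasDerivWithinAt_rightDeriv hf x).add (hasDerivWithinAt_rightDeriv hg x))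

/-- A jump `2 * M` of the slope across `[t - δ, t + δ]` leaves room for a cone of slope `M` with
vertex at `t`, up to the error `2 * M * δ`. -/
lemma exists_cone_le {f : ℝ → ℝ} (hf : ConvexOn ℝ univ f) {t δ M : ℝ} (hδ : 0 ≤ δ)
    (hM : 0 ≤ M) (hjump : rightDeriv f (t - δ) + 2 * M ≤ rightDeriv f (t + δ)) :
    ∃ b, ∀ s, f t + b * (s - t) + M * |s - t| ≤ f s + 2 * M * δ := by
  set A := rightDeriv f (t - δ)
  set m := rightDeriv f t
  set B := rightDeriv f (t + δ)
  have hAm : A ≤ m := monotone_rightDeriv hf (by linarith)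
  have hmB : m ≤ B := monotone_rightDeriv hf (by linarith)
  obtain ⟨b, hAb, hbB, hbm, hmb⟩ : ∃ b, A + M ≤ b ∧ b + M ≤ B ∧ b ≤ m + M ∧ m ≤ b + M := by
    refine ⟨max (A + M) (min m (B - M)), le_max_left _ _, ?_, ?_, ?_⟩ <;>
    rcases max_cases (A + M) (min m (B - M)) <;>
    rcases min_cases m (B - M) <;>
    linarith
  refine ⟨b, fun s => ?_⟩
  have hsupp := add_rightDeriv_mul_sub_le hf t
  have hleft := add_rightDeriv_mul_sub_le hf (t - δ) s
  have hright := add_rightDeriv_mul_sub_le hf (t + δ) s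
  rcases le_total t s with hts | hst
  · rw [abs_of_nonneg (sub_nonneg.2 hts)]
    rcases le_total s (t + δ) with hs | hs
    · nlinarith [hsupp s]
    · nlinarith [hsupp (t + δ)]
  · rw [abs_of_nonpos (sub_nonpos.2 hst)]
    rcases le_total s (t - δ) with hs | hs
    · nlinarith [hsupp (t - δ)]
    · nlinarith [hsupp s]

/-! ### Potentials of a measure -/

/-- The put potential `t ↦ ∫ (t - x)⁺ dμ(x)`, a convex function with second derivative `μ`. -/
noncomputable def putPotential (μ : Measure ℝ) (t : ℝ) : ℝ := ∫ x, max (t - x) 0 ∂μ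

/-- The call potential `t ↦ ∫ (x - t)⁺ dμ(x)`, the mirror image of `putPotential`. -/
noncomputable def callPotential (μ : Measure ℝ) (t : ℝ) : ℝ := ∫ x, max (x - t) 0 ∂μ

lemma putPotential_nonneg (μ : Measure ℝ) (t : ℝ) : 0 ≤ putPotential μ t :=
  integral_nonneg fun _ => le_max_right _ _

lemma callPotential_nonneg (μ : Measure ℝ) (t : ℝ) : 0 ≤ callPotential μ t :=
  integral_nonneg fun _ => le_max_right _ _

lemma max_sub_zero_eq (x t : ℝ) : max (x - t) 0 = max (t - x) 0 + x - t := by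
  rcases le_total x t with h | h
  · rw [max_eq_right (by linarith), max_eq_left (by linarith)]
    ring
  · rw [max_eq_left (by linarith), max_eq_right (by linarith)]
    ring

lemma tendsto_integral_zero_of_abs_le {α ι : Type*} [MeasurableSpace α] {μ : Measure α}
    {l : Filter ι} [l.IsCountablyGenerated] {F : ι → α → ℝ} {g : α → ℝ} (hg : Integrable g μ)
    (hF : ∀ t, AEStronglyMeasurable (F t) μ) (hbound : ∀ᶠ t in l, ∀ x, |F t x| ≤ g x)
    (hzero : ∀ x, ∀ᶠ t in l, F t x = 0) : Tendsto (fun t => ∫ x, F t x ∂μ) l (𝓝 0) := by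
  simpa only [integral_zero] using
    tendsto_integral_filter_of_dominated_convergence g (.of_forall hF)
      (hbound.mono fun t ht => .of_forall ht) hg
      (.of_forall fun x => tendsto_const_nhds.congr' ((hzero x).mono fun t ht => ht.symm))

section Potential

variable {μ : Measure ℝ} [IsFiniteMeasure μ]

lemma continuousWithinAt_measureReal_Iic (μ : Measure ℝ) [IsFiniteMeasure μ] (t : ℝ) :
    ContinuousWithinAt (fun s => μ.real (Iic s)) (Ici t) t := by
  rw [← continuousWithinAt_Ioi_iff_Ici]
  have hInter : ⋂ s > t, Iic s = Iic t := by
    ext x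
    simpa only [mem_iInter, mem_Iic] using
      ⟨le_of_forall_gt_imp_ge_of_dense, fun hx s hs => hx.trans (le_of_lt hs)⟩
  have hlim := tendsto_measure_biInter_gt (μ := μ) (s := Iic) (a := t)
    (fun _ _ => measurableSet_Iic.nullMeasurableSet) (fun _ _ _ hij => Iic_subset_Iic.2 hij)
    ⟨t + 1, by simp, measure_ne_top _ _⟩
  rw [hInter] at hlim
  exact (ENNReal.tendsto_toReal (measure_ne_top _ _)).comp hlim

lemma measureReal_Iic_add_Ioc (μ : Measure ℝ) [IsFiniteMeasure μ] {a b : ℝ} (hab : a ≤ b) :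
    μ.real (Iic a) + μ.real (Ioc a b) = μ.real (Iic b) := by
  rw [← measureReal_union (Iic_disjoint_Ioc le_rfl) measurableSet_Ioc, Iic_union_Ioc_eq_Iic hab]

variable (hμ : Integrable (fun x => x) μ)
include hμ

lemma integrable_put (t : ℝ) : Integrable (fun x => max (t - x) 0) μ :=
  ((integrable_const t).sub hμ).sup (integrable_const 0)

lemma integrable_call (t : ℝ) : Integrable (fun x => max (x - t) 0) μ :=
  (hμ.sub (integrable_const t)).sup (integrable_const 0)

lemma callPotential_eq (t : ℝ) :
    callPotential μ t = putPotential μ t + ∫ x, x ∂μ - μ.real univ * t := by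
  simp only [callPotential, putPotential, max_sub_zero_eq _ t]
  rw [integral_sub (f := fun x => max (t - x) 0 + x) ((integrable_put hμ t).add hμ)
      (integrable_const _),
    integral_add (integrable_put hμ t) hμ, integral_const, smul_eq_mul]

lemma putPotential_add_measureReal_Iic_mul_le (t s : ℝ) :
    putPotential μ t + μ.real (Iic t) * (s - t) ≤ putPotential μ s := by
  have hind : Integrable ((Iic t).indicator fun _ => s - t) μ :=
    (integrable_const _).indicator measurableSet_Iic
  calc putPotential μ t + μ.real (Iic t) * (s - t)
      = ∫ x, (max (t - x) 0 + (Iic t).indicator (fun _ => s - t) x) ∂μ := by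
        rw [integral_add (integrable_put hμ t) hind, integral_indicator measurableSet_Iic,
          setIntegral_const, smul_eq_mul, putPotential]
    _ ≤ putPotential μ s := by
        refine integral_mono ((integrable_put hμ t).add hind) (integrable_put hμ s) fun x => ?_
        by_cases hx : x ≤ t
        · simp only [mem_Iic, hx, indicator_of_mem, max_eq_left (sub_nonneg.2 hx)]
          linarith [le_max_left (s - x) 0]
        · simp only [mem_Iic, hx, not_false_eq_true, indicator_of_notMem, add_zero,
            max_eq_right (sub_nonpos.2 (not_le.1 hx).le), le_max_right]

lemma convexOn_putPotential : ConvexOn ℝ univ (putPotential μ) :=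
  convexOn_of_subgradient (putPotential_add_measureReal_Iic_mul_le hμ)

lemma hasDerivWithinAt_putPotential (t : ℝ) :
    HasDerivWithinAt (putPotential μ) (μ.real (Iic t)) (Ici t) t :=
  hasDerivWithinAt_of_subgradient (putPotential_add_measureReal_Iic_mul_le hμ)
    (continuousWithinAt_measureReal_Iic μ t)

lemma rightDeriv_putPotential (t : ℝ) : rightDeriv (putPotential μ) t = μ.real (Iic t) :=
  rightDeriv_eq_of_hasDerivWithinAt (hasDerivWithinAt_putPotential hμ t)

lemma measure_convexStieltjes_putPotential :
    (convexStieltjes (putPotential μ) (convexOn_putPotential hμ)).measure = μ := by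
  refine Measure.ext_of_Ioc _ _ fun a b hab => ?_
  rw [← ofReal_measureReal (μ := μ) (s := Ioc a b),
    ← ofReal_measureReal (by simp [StieltjesFunction.measure_Ioc]),
    convexStieltjes_measureReal_Ioc _ hab.le,
    rightDeriv_putPotential hμ, rightDeriv_putPotential hμ, ← measureReal_Iic_add_Ioc μ hab.le,
    add_sub_cancel_left]

lemma putPotential_le_add (s t : ℝ) :
    putPotential μ s ≤ putPotential μ t + μ.real univ * |s - t| := by
  have hsub := putPotential_add_measureReal_Iic_mul_le hμ s t
  have hslope : μ.real (Iic s) * (s - t) ≤ μ.real univ * |s - t| :=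
    (mul_le_mul_of_nonneg_left (le_abs_self _) measureReal_nonneg).trans
      (mul_le_mul_of_nonneg_right (measureReal_mono (subset_univ _)) (abs_nonneg _))
  linarith

lemma tendsto_putPotential_atBot : Tendsto (putPotential μ) atBot (𝓝 0) := by
  refine tendsto_integral_zero_of_abs_le hμ.abs
    (fun t => (integrable_put hμ t).aestronglyMeasurable) ?_ fun x => ?_
  · filter_upwards [eventually_le_atBot 0] with t ht x
    rw [abs_of_nonneg (le_max_right _ _)]
    exact max_le (by linarith [neg_le_abs x]) (abs_nonneg x)
  · filter_upwards [eventually_le_atBot x] with t ht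
    exact max_eq_right (sub_nonpos.2 ht)

lemma tendsto_callPotential_atTop : Tendsto (callPotential μ) atTop (𝓝 0) := by
  refine tendsto_integral_zero_of_abs_le hμ.abs
    (fun t => (integrable_call hμ t).aestronglyMeasurable) ?_ fun x => ?_
  · filter_upwards [eventually_ge_atTop 0] with t ht x
    rw [abs_of_nonneg (le_max_right _ _)]
    exact max_le (by linarith [le_abs_self x]) (abs_nonneg x)
  · filter_upwards [eventually_ge_atTop x] with t ht
    exact max_eq_right (sub_nonpos.2 ht)

end Potential

lemma convexOn_putPotential_sub {μ ν : Measure ℝ} [IsFiniteMeasure ν] (hμν : μ ≤ ν)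
    (hν : Integrable (fun x => x) ν) : ConvexOn ℝ univ (putPotential ν - putPotential μ) := by
  have : IsFiniteMeasure μ := isFiniteMeasure_of_le ν hμν
  have hsub := hν.mono_measure (Measure.sub_le (μ := ν) (ν := μ))
  convert! convexOn_putPotential hsub using 1
  ext t
  rw [Pi.sub_apply, sub_eq_iff_eq_add]
  conv_lhs => rw [← Measure.sub_add_cancel_of_le hμν]
  exact integral_add_measure (integrable_put hsub t) (integrable_put (hν.mono_measure hμν) t)

section ExistsMeasure

variable {ν : Measure ℝ} [IsFiniteMeasure ν] {W : ℝ → ℝ}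

lemma measure_convexStieltjes_le (hν : Integrable (fun x => x) ν) (hW : ConvexOn ℝ univ W)
    (hνW : ConvexOn ℝ univ (putPotential ν - W)) : (convexStieltjes W hW).measure ≤ ν := by
  rw [← measure_convexStieltjes_putPotential hν]
  have hsplit : convexStieltjes (putPotential ν) (convexOn_putPotential hν) =
      convexStieltjes W hW + convexStieltjes (putPotential ν - W) hνW := by
    rw [← convexStieltjes_add hW hνW]
    simp only [add_sub_cancel]
  rw [hsplit, StieltjesFunction.measure_add]
  exact Measure.le_add_right le_rfl

lemma putPotential_measure_convexStieltjes (hW : ConvexOn ℝ univ W)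
    [IsFiniteMeasure (convexStieltjes W hW).measure]
    (hint : Integrable (fun x => x) (convexStieltjes W hW).measure)
    (hbot : Tendsto W atBot (𝓝 0)) : putPotential (convexStieltjes W hW).measure = W := by
  set m := (convexStieltjes W hW).measure
  set c := m.real (Iic 0) - rightDeriv W 0
  have hderiv : ∀ x, m.real (Iic x) = rightDeriv W x + c := by
    intro x
    rcases le_total 0 x with hx | hx <;>
    linarith [measureReal_Iic_add_Ioc m hx, convexStieltjes_measureReal_Ioc hW hx]
  have hincr : ∀ a b, a ≤ b →
      putPotential m b - putPotential m a = W b - W a + c * (b - a) := fun a b hab =>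
    sub_eq_sub_add_mul_of_hasDerivWithinAt hab
      (continuous_of_convexOn_univ (convexOn_putPotential hint)).continuousOn
      (continuous_of_convexOn_univ hW).continuousOn
      (fun x _ => hasDerivWithinAt_putPotential hint x)
      (fun x _ => hasDerivWithinAt_rightDeriv hW x) (fun x _ => hderiv x)
  have haffine : ∀ t, putPotential m t - W t = c * t + (putPotential m 0 - W 0) := by
    intro t
    rcases le_total 0 t with ht | ht <;> linarith [hincr _ _ ht]
  obtain ⟨hc, hk⟩ := eq_zero_of_tendsto_affine
    (tendsto_atBot_add_const_right _ _ tendsto_id)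
    (by rw [← sub_zero (0 : ℝ)]; exact ((tendsto_putPotential_atBot hint).sub hbot).congr haffine)
  ext t
  linarith [haffine t, show c * t = 0 by rw [hc, zero_mul]]

lemma exists_le_putPotential_eq (hν : Integrable (fun x => x) ν) (hW : ConvexOn ℝ univ W)
    (hνW : ConvexOn ℝ univ (putPotential ν - W)) (hbot : Tendsto W atBot (𝓝 0)) :
    ∃ m ≤ ν, putPotential m = W := by
  have hle := measure_convexStieltjes_le hν hW hνW
  have := isFiniteMeasure_of_le ν hle
  exact ⟨_, hle, putPotential_measure_convexStieltjes hW (hν.mono_measure hle) hbot⟩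

end ExistsMeasure

/-! ### Convex order in terms of potentials -/

section Taylor

instance isFiniteMeasure_restrict_Ioc (g : StieltjesFunction ℝ) (a b : ℝ) :
    IsFiniteMeasure (g.measure.restrict (Ioc a b)) :=
  isFiniteMeasure_restrict.2 (by simp [StieltjesFunction.measure_Ioc])

variable {f : ℝ → ℝ} (hf : ConvexOn ℝ univ f)

lemma setIntegral_Ioc_sub_left_convexStieltjes {a b : ℝ} (hab : a ≤ b) :
    ∫ t in Ioc a b, (b - t) ∂(convexStieltjes f hf).measure =
      f b - f a - rightDeriv f a * (b - a) := by
  set m := (convexStieltjes f hf).measure.restrict (Ioc a b) with hm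
  have hmem : ∀ᵐ t ∂m, t ∈ Ioc a b := ae_restrict_mem measurableSet_Ioc
  have hint : Integrable (fun t => t) m := continuous_id.integrableOn_Ioc
  have hPb : ∫ t, (b - t) ∂m = putPotential m b :=
    integral_congr_ae (hmem.mono fun t ht => (max_eq_left (sub_nonneg.2 ht.2)).symm)
  have hPa : putPotential m a = 0 :=
    integral_eq_zero_of_ae (hmem.mono fun t ht => max_eq_right (sub_nonpos.2 ht.1.le))
  have hIic : ∀ x ∈ Ico a b, m.real (Iic x) = rightDeriv f x + -rightDeriv f a := by
    intro x hx
    rw [hm, measureReal_restrict_apply measurableSet_Iic, inter_comm, Ioc_inter_Iic,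
      min_eq_right hx.2.le, convexStieltjes_measureReal_Ioc hf hx.1, sub_eq_add_neg]
  have hsub := sub_eq_sub_add_mul_of_hasDerivWithinAt hab
    (continuous_of_convexOn_univ (convexOn_putPotential hint)).continuousOn
    (continuous_of_convexOn_univ hf).continuousOn
    (fun x _ => hasDerivWithinAt_putPotential hint x)
    (fun x _ => hasDerivWithinAt_rightDeriv hf x) hIic
  linarith

lemma setIntegral_Ioc_sub_right_convexStieltjes {a b : ℝ} (hab : a ≤ b) :
    ∫ t in Ioc a b, (t - a) ∂(convexStieltjes f hf).measure =
      f a - f b - rightDeriv f b * (a - b) := by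
  have hint : IntegrableOn (fun t => b - t) (Ioc a b) (convexStieltjes f hf).measure :=
    (continuous_const.sub continuous_id).integrableOn_Ioc
  calc ∫ t in Ioc a b, (t - a) ∂(convexStieltjes f hf).measure
      = ∫ t in Ioc a b, ((b - a) - (b - t)) ∂(convexStieltjes f hf).measure := by
        simp only [sub_sub_sub_cancel_left]
    _ = f a - f b - rightDeriv f b * (a - b) := by
        rw [integral_sub (integrable_const _) hint, setIntegral_const, smul_eq_mul,
          convexStieltjes_measureReal_Ioc hf hab, setIntegral_Ioc_sub_left_convexStieltjes hf hab]
        ring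

/-- The kernel of the remainder `f x - f 0 - f' 0 * x = ∫ k x t df'(t)` in Taylor's formula for
a convex function `f`; the derivatives are right derivatives, so that the integral runs over
`(0, x]` or `(x, 0]`. -/
noncomputable def taylorKernel (x t : ℝ) : ℝ := if 0 < t then max (x - t) 0 else max (t - x) 0

lemma measurable_taylorKernel : Measurable (fun p : ℝ × ℝ => taylorKernel p.1 p.2) :=
  Measurable.ite (measurableSet_lt measurable_const measurable_snd) (by fun_prop) (by fun_prop)

lemma taylorKernel_eq_indicator_Ioc_zero {x : ℝ} (hx : 0 ≤ x) :
    taylorKernel x = (Ioc 0 x).indicator fun t => x - t := by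
  ext t
  simp only [taylorKernel, indicator, mem_Ioc]
  split_ifs <;> grind

lemma taylorKernel_eq_indicator_Ioc_self {x : ℝ} (hx : x ≤ 0) :
    taylorKernel x = (Ioc x 0).indicator fun t => t - x := by
  ext t
  simp only [taylorKernel, indicator, mem_Ioc]
  split_ifs <;> grind

lemma lintegral_taylorKernel (x : ℝ) :
    ∫⁻ t, ENNReal.ofReal (taylorKernel x t) ∂(convexStieltjes f hf).measure =
      ENNReal.ofReal (f x - f 0 - rightDeriv f 0 * x) := by
  rcases le_total 0 x with hx | hx
  · rw [taylorKernel_eq_indicator_Ioc_zero hx, ← ofReal_integral_eq_lintegral_ofReal,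
      integral_indicator measurableSet_Ioc, setIntegral_Ioc_sub_left_convexStieltjes hf hx,
      sub_zero]
    · exact (continuous_const.sub continuous_id).integrableOn_Ioc.integrable_indicator
        measurableSet_Ioc
    · exact .of_forall (indicator_nonneg fun t ht => sub_nonneg.2 ht.2)
  · rw [taylorKernel_eq_indicator_Ioc_self hx, ← ofReal_integral_eq_lintegral_ofReal,
      integral_indicator measurableSet_Ioc, setIntegral_Ioc_sub_right_convexStieltjes hf hx,
      sub_zero]
    · exact (continuous_id.sub continuous_const).integrableOn_Ioc.integrable_indicator
        measurableSet_Ioc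
    · exact .of_forall (indicator_nonneg fun t ht => sub_nonneg.2 ht.1.le)

end Taylor

section ConvexOrder

variable {μ ν : Measure ℝ} [IsFiniteMeasure μ] [IsFiniteMeasure ν]

lemma lintegral_put (hμ : Integrable (fun x => x) μ) (t : ℝ) :
    ∫⁻ x, ENNReal.ofReal (max (t - x) 0) ∂μ = ENNReal.ofReal (putPotential μ t) :=
  (ofReal_integral_eq_lintegral_ofReal (integrable_put hμ t)
    (.of_forall fun _ => le_max_right _ _)).symm

lemma lintegral_call (hμ : Integrable (fun x => x) μ) (t : ℝ) :
    ∫⁻ x, ENNReal.ofReal (max (x - t) 0) ∂μ = ENNReal.ofReal (callPotential μ t) :=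
  (ofReal_integral_eq_lintegral_ofReal (integrable_call hμ t)
    (.of_forall fun _ => le_max_right _ _)).symm

lemma lintegral_convex_sub_affine (μ : Measure ℝ) [IsFiniteMeasure μ] {f : ℝ → ℝ}
    (hf : ConvexOn ℝ univ f) :
    ∫⁻ x, ENNReal.ofReal (f x - f 0 - rightDeriv f 0 * x) ∂μ =
      ∫⁻ t, ∫⁻ x, ENNReal.ofReal (taylorKernel x t) ∂μ ∂(convexStieltjes f hf).measure := by
  simp only [← lintegral_taylorKernel hf]
  exact lintegral_lintegral_swap measurable_taylorKernel.ennreal_ofReal.aemeasurable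

lemma integrable_convex_sub_affine {f : ℝ → ℝ} (hμ : Integrable (fun x => x) μ)
    (hfμ : Integrable f μ) : Integrable (fun x => f x - f 0 - rightDeriv f 0 * x) μ :=
  (hfμ.sub (integrable_const _)).sub (hμ.const_mul _)

lemma convex_sub_affine_nonneg {f : ℝ → ℝ} (hf : ConvexOn ℝ univ f) (x : ℝ) :
    0 ≤ f x - f 0 - rightDeriv f 0 * x := by
  linarith [add_rightDeriv_mul_sub_le hf 0 x]

lemma integral_convex_sub_affine {f : ℝ → ℝ} (hμ : Integrable (fun x => x) μ)
    (hfμ : Integrable f μ) :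
    ∫ x, (f x - f 0 - rightDeriv f 0 * x) ∂μ =
      ∫ x, f x ∂μ - f 0 * μ.real univ - rightDeriv f 0 * ∫ x, x ∂μ := by
  rw [integral_sub (f := fun x => f x - f 0) (hfμ.sub (integrable_const _)) (hμ.const_mul _),
    integral_sub hfμ (integrable_const _), integral_const_mul, integral_const, smul_eq_mul,
    mul_comm (f 0)]

lemma lintegral_taylorKernel_mono (hμ : Integrable (fun x => x) μ)
    (hν : Integrable (fun x => x) ν) (hmass : μ.real univ = ν.real univ)
    (hmean : ∫ x, x ∂μ = ∫ x, x ∂ν) (hput : ∀ t, putPotential μ t ≤ putPotential ν t) (t : ℝ) :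
    ∫⁻ x, ENNReal.ofReal (taylorKernel x t) ∂μ ≤ ∫⁻ x, ENNReal.ofReal (taylorKernel x t) ∂ν := by
  simp only [taylorKernel]
  split_ifs
  · rw [lintegral_call hμ, lintegral_call hν, callPotential_eq hμ, callPotential_eq hν, hmass,
      hmean]
    gcongr
    exact hput t
  · rw [lintegral_put hμ, lintegral_put hν]
    exact ENNReal.ofReal_le_ofReal (hput t)

lemma convexOrder_of_putPotential_le (hμ : Integrable (fun x => x) μ)
    (hν : Integrable (fun x => x) ν) (hmass : μ.real univ = ν.real univ)
    (hmean : ∫ x, x ∂μ = ∫ x, x ∂ν) (hput : ∀ t, putPotential μ t ≤ putPotential ν t) :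
    ConvexOrder μ ν := by
  intro f hf hfμ hfν
  have hle := lintegral_mono (μ := (convexStieltjes f hf).measure)
    (lintegral_taylorKernel_mono hμ hν hmass hmean hput)
  rw [← lintegral_convex_sub_affine, ← lintegral_convex_sub_affine,
    ← ofReal_integral_eq_lintegral_ofReal (integrable_convex_sub_affine hμ hfμ)
      (.of_forall (convex_sub_affine_nonneg hf)),
    ← ofReal_integral_eq_lintegral_ofReal (integrable_convex_sub_affine hν hfν)
      (.of_forall (convex_sub_affine_nonneg hf)),
    ENNReal.ofReal_le_ofReal_iff (integral_nonneg (convex_sub_affine_nonneg hf)),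
    integral_convex_sub_affine hμ hfμ, integral_convex_sub_affine hν hfν, hmass, hmean] at hle
  linarith

namespace ConvexOrder

lemma integral_eq {μ ν : Measure ℝ} (h : ConvexOrder μ ν) {f : ℝ → ℝ} (hconvex : ConvexOn ℝ univ f)
    (hconcave : ConcaveOn ℝ univ f) (hfμ : Integrable f μ) (hfν : Integrable f ν) :
    ∫ x, f x ∂μ = ∫ x, f x ∂ν := by
  refine le_antisymm (h f hconvex hfμ hfν) ?_
  simpa only [Pi.neg_apply, integral_neg, neg_le_neg_iff] using h (-f) hconcave.neg hfμ.neg hfν.neg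

lemma measureReal_univ_eq (h : ConvexOrder μ ν) : μ.real univ = ν.real univ := by
  simpa only [integral_const, smul_eq_mul, mul_one] using
    h.integral_eq (convexOn_const 1 convex_univ) (concaveOn_const 1 convex_univ)
      (integrable_const _) (integrable_const _)

lemma isProbabilityMeasure [IsProbabilityMeasure μ] (h : ConvexOrder μ ν) :
    IsProbabilityMeasure ν :=
  isProbabilityMeasure_iff_real.2 (h.measureReal_univ_eq.symm.trans probReal_univ)

lemma integral_id_eq {μ ν : Measure ℝ} (h : ConvexOrder μ ν) (hμ : Integrable (fun x => x) μ)
    (hν : Integrable (fun x => x) ν) : ∫ x, x ∂μ = ∫ x, x ∂ν :=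
  h.integral_eq (convexOn_id convex_univ) (concaveOn_id convex_univ) hμ hν

lemma putPotential_le (h : ConvexOrder μ ν) (hμ : Integrable (fun x => x) μ)
    (hν : Integrable (fun x => x) ν) (t : ℝ) : putPotential μ t ≤ putPotential ν t :=
  h _ (((convexOn_const t convex_univ).sub (concaveOn_id convex_univ)).sup
    (convexOn_const 0 convex_univ)) (integrable_put hμ t) (integrable_put hν t)

lemma callPotential_le (h : ConvexOrder μ ν) (hμ : Integrable (fun x => x) μ)
    (hν : Integrable (fun x => x) ν) (t : ℝ) : callPotential μ t ≤ callPotential ν t :=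
  h _ (((convexOn_id convex_univ).sub (concaveOn_const t convex_univ)).sup
    (convexOn_const 0 convex_univ)) (integrable_call hμ t) (integrable_call hν t)

lemma tendsto_putPotential_sub_atTop (h : ConvexOrder μ ν) (hμ : Integrable (fun x => x) μ)
    (hν : Integrable (fun x => x) ν) :
    Tendsto (fun t => putPotential ν t - putPotential μ t) atTop (𝓝 0) := by
  rw [← sub_zero (0 : ℝ)]
  refine ((tendsto_callPotential_atTop hν).sub (tendsto_callPotential_atTop hμ)).congr fun t => ?_
  rw [callPotential_eq hν, callPotential_eq hμ, h.measureReal_univ_eq, h.integral_id_eq hμ hν]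
  ring

lemma of_putPotential_between {m : Measure ℝ} [IsFiniteMeasure m] (h : ConvexOrder μ ν)
    (hμ : Integrable (fun x => x) μ) (hν : Integrable (fun x => x) ν)
    (hm : Integrable (fun x => x) m) (hμm : ∀ t, putPotential μ t ≤ putPotential m t)
    (hmν : ∀ t, putPotential m t ≤ putPotential ν t) : ConvexOrder μ m := by
  have hput : Tendsto (fun t => putPotential m t - putPotential μ t) atTop (𝓝 0) :=
    squeeze_zero (fun t => sub_nonneg.2 (hμm t)) (fun t => sub_le_sub_right (hmν t) _)
      (h.tendsto_putPotential_sub_atTop hμ hν)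
  have hcall := (tendsto_callPotential_atTop hm).sub (tendsto_callPotential_atTop hμ)
  have haffine : Tendsto (fun t => (μ.real univ - m.real univ) * t + (∫ x, x ∂m - ∫ x, x ∂μ))
      atTop (𝓝 0) := by
    refine ((hcall.sub hput).congr fun t => ?_).trans (by simp only [sub_zero, le_refl])
    rw [callPotential_eq hm, callPotential_eq hμ]
    ring
  obtain ⟨hmass, hmean⟩ :=
    eq_zero_of_tendsto_affine (tendsto_atTop_add_const_right _ _ tendsto_id) haffine
  exact convexOrder_of_putPotential_le hμ hm (sub_eq_zero.1 hmass) (sub_eq_zero.1 hmean).symm hμm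

end ConvexOrder

end ConvexOrder

/-! ### The convex envelope and the potential of the shadow -/

section ConvexEnvelope

/-- The convex envelope of `f`, whose value at `x` is the supremum of the values at `x` of the
affine minorants of `f`; it is only meaningful if such a minorant exists. -/
noncomputable def convexEnvelope (f : ℝ → ℝ) (x : ℝ) : ℝ :=
  sSup {c | ∃ b, ∀ y, c + b * (y - x) ≤ f y}

variable {f g h k : ℝ → ℝ}

lemma le_convexEnvelope_of_affine_le {b c x : ℝ} (hle : ∀ y, c + b * (y - x) ≤ f y) :
    c ≤ convexEnvelope f x :=
  le_csSup ⟨f x, fun v ⟨m, hv⟩ => by simpa using hv x⟩ ⟨b, hle⟩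

section Minorant

variable (hh : ConvexOn ℝ univ h)
include hh

lemma le_convexEnvelope (hhf : h ≤ f) : h ≤ convexEnvelope f := fun x =>
  le_convexEnvelope_of_affine_le fun y => (add_rightDeriv_mul_sub_le hh x y).trans (hhf y)

lemma convexEnvelope_le_of_forall (hhf : h ≤ f) {x M : ℝ}
    (hM : ∀ b c, (∀ y, c + b * (y - x) ≤ f y) → c ≤ M) : convexEnvelope f x ≤ M :=
  csSup_le ⟨h x, rightDeriv h x, fun y => (add_rightDeriv_mul_sub_le hh x y).trans (hhf y)⟩
    fun c ⟨b, hle⟩ => hM b c hle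

lemma convexEnvelope_le (hhf : h ≤ f) : convexEnvelope f ≤ f := fun x =>
  convexEnvelope_le_of_forall hh hhf fun b c hle => by simpa using hle x

lemma convexOn_convexEnvelope (hhf : h ≤ f) : ConvexOn ℝ univ (convexEnvelope f) := by
  refine ⟨convex_univ, fun y _ z _ α β hα hβ hαβ => ?_⟩
  simp only [smul_eq_mul]
  set x := α * y + β * z with hx
  refine convexEnvelope_le_of_forall hh hhf fun b c hle => ?_
  have hval : ∀ w, c + b * (w - x) ≤ convexEnvelope f w := fun w =>
    le_convexEnvelope_of_affine_le (b := b) fun u => le_of_eq_of_le (by ring) (hle u)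
  calc c = α * (c + b * (y - x)) + β * (c + b * (z - x)) := by
        linear_combination (b * x - c) * hαβ + b * hx
    _ ≤ α * convexEnvelope f y + β * convexEnvelope f z := by
        gcongr <;> exact hval _

end Minorant

lemma convexOn_of_le_affine (hle : ∀ c d y z, f y ≤ c + d * y → f z ≤ c + d * z →
    ∀ x ∈ Icc y z, f x ≤ c + d * x) : ConvexOn ℝ univ f := by
  refine LinearOrder.convexOn_of_lt convex_univ fun y _ z _ hyz α β hα hβ hαβ => ?_
  obtain rfl : β = 1 - α := by linarith
  set d := (f z - f y) / (z - y)
  have hd : d * (z - y) = f z - f y := div_mul_cancel₀ _ (sub_ne_zero.2 hyz.ne')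
  have hx := hle (f y - d * y) d y z (by linarith) (by linarith) (α • y + (1 - α) • z)
    ⟨by simp only [smul_eq_mul]; nlinarith, by simp only [smul_eq_mul]; nlinarith⟩
  simp only [smul_eq_mul] at hx ⊢
  linear_combination hx + (1 - α) * hd

lemma convexOn_sub_affine (hf : ConvexOn ℝ univ f) (c d : ℝ) :
    ConvexOn ℝ univ fun x => f x - (c + d * x) :=
  hf.sub ((concaveOn_const c convex_univ).add
    ((LinearMap.mulLeft ℝ d).concaveOn convex_univ))

lemma le_affine_of_mem_Icc (hf : ConvexOn ℝ univ f) {c d x y z : ℝ} (hy : f y ≤ c + d * y)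
    (hz : f z ≤ c + d * z) (hx : x ∈ Icc y z) : f x ≤ c + d * x :=
  sub_nonpos.1 <|
    ((convexOn_sub_affine hf c d).le_max_of_mem_Icc (mem_univ y) (mem_univ z) hx).trans
      (max_le (sub_nonpos.2 hy) (sub_nonpos.2 hz))

lemma affine_le_of_lt_affine (hf : ConvexOn ℝ univ f) {c d x y z : ℝ} (hx : f x < c + d * x)
    (hy : c + d * y ≤ f y) (hyxz : y ∈ uIcc x z) : c + d * z ≤ f z := by
  rw [← segment_eq_uIcc] at hyxz
  have hmax := (convexOn_sub_affine hf c d).le_on_segment (mem_univ x) (mem_univ z) hyxz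
  rcases le_max_iff.1 hmax with hmax | hmax <;> linarith

/- If the chord of `W = g - convexEnvelope (g - k)` over `[y, z]` passes below `W x`, then the
tangent at `x` of `g` minus that chord is an affine minorant of `g - k` that exceeds the envelope
at `x`: on `[y, z]` because `k ≤ W` lies below the chord, elsewhere because it is below the
envelope. -/
lemma convexOn_sub_convexEnvelope (hg : ConvexOn ℝ univ g) (hk : ConvexOn ℝ univ k)
    (hh : ConvexOn ℝ univ h) (hle : h ≤ g - k) : ConvexOn ℝ univ (g - convexEnvelope (g - k)) := by
  set E := convexEnvelope (g - k)
  have hE : ConvexOn ℝ univ E := convexOn_convexEnvelope hh hle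
  have hkW : ∀ u, k u ≤ g u - E u := fun u => le_sub_comm.1 (convexEnvelope_le hh hle u)
  refine convexOn_of_le_affine fun c d y z hy hz x hx => ?_
  simp only [Pi.sub_apply] at hy hz ⊢
  by_contra! hlt
  set m := rightDeriv g x - d
  set a := g x - (c + d * x) - m * x
  have htangent : ∀ u, a + m * u ≤ g u - (c + d * u) := fun u => by
    linarith [add_rightDeriv_mul_sub_le hg x u]
  have hEx : E x < a + m * x := by linarith
  have hminor : ∀ u, a + m * u ≤ (g - k) u := by
    intro u
    by_cases hu : u ∈ Icc y z
    · have hku := le_affine_of_mem_Icc hk ((hkW y).trans hy) ((hkW z).trans hz) hu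
      exact (htangent u).trans (sub_le_sub_left hku _)
    · refine (?_ : a + m * u ≤ E u).trans (convexEnvelope_le hh hle u)
      rcases lt_or_ge u y with huy | hyu
      · exact affine_le_of_lt_affine hE hEx (by linarith [htangent y])
          (Icc_subset_uIcc' ⟨huy.le, hx.1⟩)
      · have hzu : z ≤ u := (lt_of_not_ge fun huz => hu ⟨hyu, huz⟩).le
        exact affine_le_of_lt_affine hE hEx (by linarith [htangent z])
          (Icc_subset_uIcc ⟨hx.2, hzu⟩)
  have hxE : a + m * x ≤ E x :=
    le_convexEnvelope_of_affine_le (b := m) fun u => le_of_eq_of_le (by ring) (hminor u)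
  exact hEx.not_ge hxE

end ConvexEnvelope

namespace IsShadow

lemma integrable_id {η ν S : Measure ℝ} (hS : IsShadow η ν S) (hν : Integrable (fun x => x) ν) :
    Integrable (fun x => x) S :=
  hν.mono_measure hS.2.1

lemma isProbabilityMeasure {η ν S : Measure ℝ} [IsProbabilityMeasure η] [IsFiniteMeasure ν]
    (hS : IsShadow η ν S) : IsProbabilityMeasure S :=
  have := isFiniteMeasure_of_le ν hS.2.1
  hS.1.isProbabilityMeasure

variable {η ν S : Measure ℝ} [IsFiniteMeasure η] [IsFiniteMeasure ν] (hS : IsShadow η ν S)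
  (hη : Integrable (fun x => x) η) (hν : Integrable (fun x => x) ν)
include hS hη hν

theorem putPotential_eq :
    putPotential S = putPotential ν - convexEnvelope (putPotential ν - putPotential η) := by
  obtain ⟨hηS, hSν, hmin⟩ := hS
  have : IsFiniteMeasure S := isFiniteMeasure_of_le ν hSν
  have hSint := hν.mono_measure hSν
  have hh := convexOn_putPotential_sub hSν hν
  have hle : putPotential ν - putPotential S ≤ putPotential ν - putPotential η := fun t =>
    sub_le_sub_left (hηS.putPotential_le hη hSint t) _
  set E := convexEnvelope (putPotential ν - putPotential η)
  have hηW : ∀ t, putPotential η t ≤ (putPotential ν - E) t := fun t =>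
    le_sub_comm.1 (convexEnvelope_le hh hle t)
  have hWS : ∀ t, (putPotential ν - E) t ≤ putPotential S t := fun t =>
    sub_le_comm.1 (le_convexEnvelope hh hle t)
  obtain ⟨m, hmν, hm⟩ := exists_le_putPotential_eq hν
    (convexOn_sub_convexEnvelope (convexOn_putPotential hν) (convexOn_putPotential hη) hh hle)
    (by simpa only [sub_sub_cancel] using convexOn_convexEnvelope hh hle)
    (squeeze_zero (fun t => (putPotential_nonneg η t).trans (hηW t)) hWS
      (tendsto_putPotential_atBot hSint))
  have : IsFiniteMeasure m := isFiniteMeasure_of_le ν hmν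
  rw [← hm] at hηW hWS ⊢
  have hmint := hν.mono_measure hmν
  have hηm := hηS.of_putPotential_between hη hSint hmint hηW hWS
  exact le_antisymm ((hmin m hηm hmν).putPotential_le hSint hmint) hWS

/-- The mass of `ν` around `t` bends `putPotential ν` so much that the envelope touches
`putPotential ν - putPotential η` at `t`, up to an error proportional to `δ`. -/
theorem putPotential_le {t δ : ℝ} (hδ : 0 ≤ δ)
    (hmass : 2 * η.real univ ≤ ν.real (Ioc (t - δ) (t + δ))) :
    putPotential S t ≤ putPotential η t + 2 * η.real univ * δ := by
  obtain ⟨b, hb⟩ := exists_cone_le (convexOn_putPotential hν) (t := t) hδ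
    (measureReal_nonneg (μ := η) (s := univ)) (by
      rw [rightDeriv_putPotential hν, rightDeriv_putPotential hν,
        ← measureReal_Iic_add_Ioc ν (by linarith : t - δ ≤ t + δ)]
      gcongr)
  have henv : putPotential ν t - putPotential η t - 2 * η.real univ * δ ≤
      convexEnvelope (putPotential ν - putPotential η) t :=
    le_convexEnvelope_of_affine_le (b := b) fun s => by
      rw [Pi.sub_apply]
      linarith [hb s, putPotential_le_add hη s t]
  rw [hS.putPotential_eq hη hν, Pi.sub_apply]
  linarith

end IsShadow

/-! ### Convergence of potentials and the Wasserstein distance -/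

section Lipschitz

variable {f : ℝ → ℝ} (hf : LipschitzWith 1 f)
include hf

lemma abs_sub_le_of_lipschitz (x y : ℝ) : |f x - f y| ≤ |x - y| := by
  simpa only [Real.dist_eq, NNReal.coe_one, one_mul] using hf.dist_le_mul x y

lemma abs_slope_le_one (a b : ℝ) : |slope f a b| ≤ 1 := by
  rw [slope_def_field, abs_div]
  exact div_le_one_of_le₀ (abs_sub_le_of_lipschitz hf b a) (abs_nonneg _)

lemma abs_sub_slope_mul_le {a b x : ℝ} (hx : x ∈ Icc a b) :
    |f x - f a - slope f a b * (x - a)| ≤ 2 * (b - a) := by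
  have hfx := abs_sub_le_of_lipschitz hf x a
  have hslope : |slope f a b * (x - a)| ≤ |x - a| := by
    rw [abs_mul]
    exact mul_le_of_le_one_left (abs_nonneg _) (abs_slope_le_one hf a b)
  rw [abs_of_nonneg (sub_nonneg.2 hx.1)] at hfx hslope
  linarith [abs_sub (f x - f a) (slope f a b * (x - a)), hx.2]

lemma integrable_of_lipschitz {μ : Measure ℝ} [IsFiniteMeasure μ]
    (hμ : Integrable (fun x => x) μ) : Integrable f μ := by
  refine ((integrable_const |f 0|).add hμ.abs).mono' hf.continuous.aestronglyMeasurable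
    (.of_forall fun x => ?_)
  have hx := abs_sub_le_of_lipschitz hf x 0
  rw [sub_zero] at hx
  simp only [Real.norm_eq_abs, Pi.add_apply]
  linarith [abs_sub_abs_le_abs_sub (f x) (f 0)]

lemma abs_integral_sub_le_integral_abs {μ : Measure ℝ} [IsProbabilityMeasure μ]
    (hμ : Integrable (fun x => x) μ) : |∫ x, f x ∂μ - f 0| ≤ ∫ x, |x| ∂μ := by
  have hint := integrable_of_lipschitz hf hμ
  calc |∫ x, f x ∂μ - f 0| = |∫ x, (f x - f 0) ∂μ| := by
        rw [integral_sub hint (integrable_const _), integral_const, probReal_univ, one_smul]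
    _ ≤ ∫ x, |f x - f 0| ∂μ := abs_integral_le_integral_abs
    _ ≤ ∫ x, |x| ∂μ := integral_mono (hint.sub (integrable_const _)).abs hμ.abs fun x => by
        simpa only [sub_zero] using abs_sub_le_of_lipschitz hf x 0

lemma abs_integral_sub_integral_le_W1 {μ ν : Measure ℝ} [IsProbabilityMeasure μ]
    [IsProbabilityMeasure ν] (hμ : Integrable (fun x => x) μ) (hν : Integrable (fun x => x) ν) :
    |∫ x, f x ∂μ - ∫ x, f x ∂ν| ≤ W1 μ ν := by
  refine le_ciSup (f := fun g : {g : ℝ → ℝ // LipschitzWith 1 g} =>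
    |∫ x, (g : ℝ → ℝ) x ∂μ - ∫ x, (g : ℝ → ℝ) x ∂ν|)
    ⟨∫ x, |x| ∂μ + ∫ x, |x| ∂ν, ?_⟩ ⟨f, hf⟩
  rintro _ ⟨⟨g, hg⟩, rfl⟩
  calc |∫ x, g x ∂μ - ∫ x, g x ∂ν| = |(∫ x, g x ∂μ - g 0) - (∫ x, g x ∂ν - g 0)| := by
        rw [sub_sub_sub_cancel_right]
    _ ≤ |∫ x, g x ∂μ - g 0| + |∫ x, g x ∂ν - g 0| := abs_sub _ _
    _ ≤ ∫ x, |x| ∂μ + ∫ x, |x| ∂ν :=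
        add_le_add (abs_integral_sub_le_integral_abs hg hμ) (abs_integral_sub_le_integral_abs hg hν)

lemma tendsto_integral_of_tendsto_W1 {ι : Type*} {l : Filter ι} {μ : ι → Measure ℝ}
    {ν : Measure ℝ} [∀ i, IsProbabilityMeasure (μ i)] [IsProbabilityMeasure ν]
    (hμ : ∀ i, Integrable (fun x => x) (μ i)) (hν : Integrable (fun x => x) ν)
    (h : Tendsto (fun i => W1 (μ i) ν) l (𝓝 0)) :
    Tendsto (fun i => ∫ x, f x ∂(μ i)) l (𝓝 (∫ x, f x ∂ν)) :=
  tendsto_iff_dist_tendsto_zero.2 <| squeeze_zero (fun _ => dist_nonneg)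
    (fun i => abs_integral_sub_integral_le_W1 hf (hμ i) hν) h

end Lipschitz

lemma lipschitzWith_put (t : ℝ) : LipschitzWith 1 fun x : ℝ => max (t - x) 0 :=
  LipschitzWith.of_dist_le_mul fun x y => by
    rw [Real.dist_eq, Real.dist_eq, NNReal.coe_one, one_mul]
    have h := abs_max_sub_max_le_abs (t - x) (t - y) 0
    rwa [sub_sub_sub_cancel_left, abs_sub_comm y] at h

lemma tendsto_putPotential_of_tendsto_W1 {ι : Type*} {l : Filter ι} {μ : ι → Measure ℝ}
    {ν : Measure ℝ} [∀ i, IsProbabilityMeasure (μ i)] [IsProbabilityMeasure ν]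
    (hμ : ∀ i, Integrable (fun x => x) (μ i)) (hν : Integrable (fun x => x) ν)
    (h : Tendsto (fun i => W1 (μ i) ν) l (𝓝 0)) (t : ℝ) :
    Tendsto (fun i => putPotential (μ i) t) l (𝓝 (putPotential ν t)) :=
  tendsto_integral_of_tendsto_W1 (lipschitzWith_put t) hμ hν h

section Interpolation

/-- The piecewise affine interpolation of `f` at the nodes `u 0 ≤ … ≤ u M`, extended by constants.
It is written in terms of `min x (u i)`, whose integral is a value of the put potential. -/
noncomputable def interpolation (f : ℝ → ℝ) (u : ℕ → ℝ) (M : ℕ) (x : ℝ) : ℝ :=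
  f (u 0) + ∑ i ∈ Finset.range M, slope f (u i) (u (i + 1)) * (min x (u (i + 1)) - min x (u i))

variable {f : ℝ → ℝ} {u : ℕ → ℝ} {M : ℕ}

lemma interpolation_succ (f : ℝ → ℝ) (u : ℕ → ℝ) (M : ℕ) (x : ℝ) :
    interpolation f u (M + 1) x = interpolation f u M x +
      slope f (u M) (u (M + 1)) * (min x (u (M + 1)) - min x (u M)) := by
  rw [interpolation, Finset.sum_range_succ, ← add_assoc, interpolation]

lemma interpolation_eq_of_le (hu : Monotone u) {x : ℝ} (hx : u M ≤ x) :
    interpolation f u M x = f (u M) := by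
  have hterm : ∀ i ∈ Finset.range M,
      slope f (u i) (u (i + 1)) * (min x (u (i + 1)) - min x (u i)) = f (u (i + 1)) - f (u i) := by
    intro i hi
    have hiM : u (i + 1) ≤ x := (hu (Finset.mem_range.1 hi)).trans hx
    rw [min_eq_right hiM, min_eq_right ((hu i.le_succ).trans hiM), mul_comm]
    exact sub_smul_slope f _ _
  rw [interpolation, Finset.sum_congr rfl hterm, Finset.sum_range_sub fun i => f (u i),
    add_sub_cancel]

lemma abs_min_sub_interpolation_le (hf : LipschitzWith 1 f) (hu : Monotone u) {ε : ℝ}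
    (hε : ∀ i, u (i + 1) - u i ≤ ε) (x : ℝ) :
    |f (min x (u M)) - interpolation f u M x| ≤ 2 * ε + max (u 0 - x) 0 := by
  have hε0 : 0 ≤ ε := (sub_nonneg.2 (hu (Nat.le_succ 0))).trans (hε 0)
  induction M with
  | zero =>
    have hconst : interpolation f u 0 x = f (u 0) := by
      simp only [interpolation, Finset.range_zero, Finset.sum_empty, add_zero]
    rw [hconst]
    refine (abs_sub_le_of_lipschitz hf _ _).trans ?_
    rcases le_total x (u 0) with hx | hx
    · rw [min_eq_left hx, abs_sub_comm, abs_of_nonneg (sub_nonneg.2 hx)]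
      linarith [le_max_left (u 0 - x) 0]
    · rw [min_eq_right hx, sub_self, abs_zero]
      positivity
  | succ M ih =>
    rw [interpolation_succ]
    rcases le_total x (u M) with hx | hx
    · rw [min_eq_left (hx.trans (hu M.le_succ)), min_eq_left hx, sub_self, mul_zero, add_zero]
      rwa [min_eq_left hx] at ih
    · rw [interpolation_eq_of_le hu hx, min_eq_right hx, ← sub_sub]
      linarith [abs_sub_slope_mul_le hf (x := min x (u (M + 1)))
        ⟨le_min hx (hu M.le_succ), min_le_right _ _⟩, hε M, le_max_right (u 0 - x) 0]

lemma abs_sub_interpolation_le (hf : LipschitzWith 1 f) (hu : Monotone u) {ε : ℝ}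
    (hε : ∀ i, u (i + 1) - u i ≤ ε) (x : ℝ) :
    |f x - interpolation f u M x| ≤ 2 * ε + max (u 0 - x) 0 + max (x - u M) 0 := by
  have hmin : |x - min x (u M)| = max (x - u M) 0 := by
    rcases le_total x (u M) with hx | hx
    · rw [min_eq_left hx, sub_self, abs_zero, max_eq_right (sub_nonpos.2 hx)]
    · rw [min_eq_right hx, abs_of_nonneg (sub_nonneg.2 hx), max_eq_left (sub_nonneg.2 hx)]
  linarith [abs_sub_le (f x) (f (min x (u M))) (interpolation f u M x),
    abs_sub_le_of_lipschitz hf x (min x (u M)), abs_min_sub_interpolation_le (M := M) hf hu hε x]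

section Integral

variable {μ : Measure ℝ} [IsProbabilityMeasure μ] (hμ : Integrable (fun x => x) μ)
include hμ

lemma integral_min (t : ℝ) : ∫ x, min x t ∂μ = t - putPotential μ t := by
  have hmin : ∀ x : ℝ, min x t = t - max (t - x) 0 := fun x => by
    rw [← min_sub_sub_left, sub_sub_cancel, sub_zero]
  simp only [hmin]
  rw [integral_sub (integrable_const _) (integrable_put hμ t), integral_const, probReal_univ,
    one_smul, putPotential]

lemma integrable_interpolation_term (f : ℝ → ℝ) (u : ℕ → ℝ) (i : ℕ) :
    Integrable (fun x => slope f (u i) (u (i + 1)) * (min x (u (i + 1)) - min x (u i))) μ :=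
  ((hμ.inf (integrable_const _)).sub (hμ.inf (integrable_const _))).const_mul _

lemma integrable_interpolation (f : ℝ → ℝ) (u : ℕ → ℝ) (M : ℕ) :
    Integrable (interpolation f u M) μ :=
  (integrable_const _).add
    (integrable_finsetSum _ fun i _ => integrable_interpolation_term hμ f u i)

lemma integral_interpolation (f : ℝ → ℝ) (u : ℕ → ℝ) (M : ℕ) :
    ∫ x, interpolation f u M x ∂μ = f (u 0) + ∑ i ∈ Finset.range M,
      slope f (u i) (u (i + 1)) *
        (u (i + 1) - putPotential μ (u (i + 1)) - (u i - putPotential μ (u i))) := by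
  have hterm := integrable_interpolation_term hμ f u
  simp only [interpolation]
  rw [integral_add (integrable_const _) (integrable_finsetSum _ fun i _ => hterm i),
    integral_finsetSum _ fun i _ => hterm i, integral_const, probReal_univ, one_smul]
  congr! 2 with i
  rw [integral_const_mul, integral_sub (f := fun x => min x _) (g := fun x => min x _)
    (hμ.inf (integrable_const _)) (hμ.inf (integrable_const _)), integral_min hμ, integral_min hμ]

lemma abs_integral_sub_integral_interpolation_le (hf : LipschitzWith 1 f) (hu : Monotone u)
    {ε : ℝ} (hε : ∀ i, u (i + 1) - u i ≤ ε) :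
    |∫ x, f x ∂μ - ∫ x, interpolation f u M x ∂μ| ≤
      2 * ε + putPotential μ (u 0) + callPotential μ (u M) := by
  have hfint := integrable_of_lipschitz hf hμ
  have hint := integrable_interpolation hμ f u M
  have hput := (integrable_const (2 * ε)).add (integrable_put hμ (u 0))
  calc |∫ x, f x ∂μ - ∫ x, interpolation f u M x ∂μ|
      ≤ ∫ x, |f x - interpolation f u M x| ∂μ := by
        rw [← integral_sub hfint hint]
        exact abs_integral_le_integral_abs
    _ ≤ ∫ x, (2 * ε + max (u 0 - x) 0 + max (x - u M) 0) ∂μ :=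
        integral_mono (hfint.sub hint).abs (hput.add (integrable_call hμ _))
          (abs_sub_interpolation_le hf hu hε)
    _ = 2 * ε + putPotential μ (u 0) + callPotential μ (u M) := by
        rw [integral_add (f := fun x => 2 * ε + max (u 0 - x) 0) hput (integrable_call hμ _),
          integral_add (integrable_const _) (integrable_put hμ _), integral_const, probReal_univ,
          one_smul, putPotential, callPotential]

end Integral

lemma W1_nonneg (μ ν : Measure ℝ) : 0 ≤ W1 μ ν := Real.iSup_nonneg fun _ => abs_nonneg _

lemma W1_le_sum_putPotential {μ ν : Measure ℝ} [IsProbabilityMeasure μ] [IsProbabilityMeasure ν]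
    (hμ : Integrable (fun x => x) μ) (hν : Integrable (fun x => x) ν) (hu : Monotone u) {ε : ℝ}
    (hε : ∀ i, u (i + 1) - u i ≤ ε) (M : ℕ) :
    W1 μ ν ≤ ∑ i ∈ Finset.range M,
        |putPotential μ (u (i + 1)) - putPotential ν (u (i + 1)) -
          (putPotential μ (u i) - putPotential ν (u i))| +
      (2 * ε + putPotential μ (u 0) + callPotential μ (u M)) +
      (2 * ε + putPotential ν (u 0) + callPotential ν (u M)) := by
  have : Nonempty {f : ℝ → ℝ // LipschitzWith 1 f} := ⟨⟨id, LipschitzWith.id⟩⟩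
  refine ciSup_le fun ⟨f, hf⟩ => ?_
  have hsum : |∫ x, interpolation f u M x ∂μ - ∫ x, interpolation f u M x ∂ν| ≤
      ∑ i ∈ Finset.range M, |putPotential μ (u (i + 1)) - putPotential ν (u (i + 1)) -
        (putPotential μ (u i) - putPotential ν (u i))| := by
    rw [integral_interpolation hμ, integral_interpolation hν, add_sub_add_left_eq_sub,
      ← Finset.sum_sub_distrib]
    refine Finset.abs_sum_le_sum_abs _ _ |>.trans (Finset.sum_le_sum fun i _ => ?_)
    rw [← mul_sub, abs_mul, ← abs_neg (_ - _)]
    refine (mul_le_of_le_one_left (abs_nonneg _) (abs_slope_le_one hf _ _)).trans_eq ?_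
    congr 1
    ring
  have hμf := abs_integral_sub_integral_interpolation_le (M := M) hμ hf hu hε
  have hνf := abs_integral_sub_integral_interpolation_le (M := M) hν hf hu hε
  rw [abs_sub_comm] at hνf
  linarith [abs_sub_le (∫ x, f x ∂μ) (∫ x, interpolation f u M x ∂μ) (∫ x, f x ∂ν),
    abs_sub_le (∫ x, interpolation f u M x ∂μ) (∫ x, interpolation f u M x ∂ν) (∫ x, f x ∂ν)]

end Interpolation

lemma exists_grid {ν : Measure ℝ} [IsFiniteMeasure ν] (hν : Integrable (fun x => x) ν) {ε : ℝ}
    (hε : 0 < ε) : ∃ (u : ℕ → ℝ) (M : ℕ), Monotone u ∧ (∀ i, u (i + 1) - u i ≤ ε) ∧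
      putPotential ν (u 0) < ε ∧ callPotential ν (u M) < ε := by
  obtain ⟨a, ha⟩ := ((tendsto_putPotential_atBot hν).eventually (gt_mem_nhds hε)).exists
  set u : ℕ → ℝ := fun i => a + i * ε with hu_def
  have hu : Tendsto u atTop atTop :=
    tendsto_atTop_add_const_left _ _ (tendsto_natCast_atTop_atTop.atTop_mul_const hε)
  obtain ⟨M, hM⟩ :=
    (((tendsto_callPotential_atTop hν).comp hu).eventually (gt_mem_nhds hε)).exists
  refine ⟨u, M, fun i j hij => ?_, fun i => ?_, ?_, hM⟩
  · simp only [hu_def]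
    gcongr
  · simp only [hu_def, Nat.cast_add, Nat.cast_one]
    linarith
  · simpa only [hu_def, Nat.cast_zero, zero_mul, add_zero] using ha

section Convergence

variable {ι : Type*} {l : Filter ι} {μ : ι → Measure ℝ} {ν : Measure ℝ}
  [∀ i, IsProbabilityMeasure (μ i)] [IsProbabilityMeasure ν]
  (hμ : ∀ i, Integrable (fun x => x) (μ i)) (hν : Integrable (fun x => x) ν)
include hμ hν

lemma tendsto_callPotential_of_tendsto_putPotential {t : ℝ}
    (hput : Tendsto (fun i => putPotential (μ i) t) l (𝓝 (putPotential ν t)))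
    (hmean : Tendsto (fun i => ∫ x, x ∂(μ i)) l (𝓝 (∫ x, x ∂ν))) :
    Tendsto (fun i => callPotential (μ i) t) l (𝓝 (callPotential ν t)) := by
  simp only [callPotential_eq hν, callPotential_eq (hμ _), probReal_univ]
  exact (hput.add hmean).sub_const _

theorem tendsto_W1_of_tendsto_putPotential
    (hput : ∀ t, Tendsto (fun i => putPotential (μ i) t) l (𝓝 (putPotential ν t)))
    (hmean : Tendsto (fun i => ∫ x, x ∂(μ i)) l (𝓝 (∫ x, x ∂ν))) :
    Tendsto (fun i => W1 (μ i) ν) l (𝓝 0) := by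
  refine tendsto_order.2 ⟨fun c hc => .of_forall fun i => hc.trans_le (W1_nonneg _ _),
    fun c hc => ?_⟩
  set ε := c / 9
  have hε : 0 < ε := by positivity
  obtain ⟨u, M, hu_mono, hu_step, hu_put, hu_call⟩ := exists_grid hν hε
  have hsum : Tendsto (fun n => ∑ i ∈ Finset.range M,
      |putPotential (μ n) (u (i + 1)) - putPotential ν (u (i + 1)) -
        (putPotential (μ n) (u i) - putPotential ν (u i))|) l (𝓝 0) := by
    simpa only [sub_self, abs_zero, Finset.sum_const_zero] using
      tendsto_finsetSum (Finset.range M) fun i _ =>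
        (((hput (u (i + 1))).sub_const (putPotential ν (u (i + 1)))).sub
          ((hput (u i)).sub_const (putPotential ν (u i)))).abs
  have htail := ((hput (u 0)).const_add (2 * ε)).add
    (tendsto_callPotential_of_tendsto_putPotential hμ hν (hput (u M)) hmean)
  have hbound := (hsum.add htail).add_const
    (2 * ε + putPotential ν (u 0) + callPotential ν (u M))
  have hlt : 0 + (2 * ε + putPotential ν (u 0) + callPotential ν (u M)) +
      (2 * ε + putPotential ν (u 0) + callPotential ν (u M)) < c := by
    linarith [show c = 9 * ε by ring]
  filter_upwards [hbound.eventually_lt_const hlt] with n hn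
  exact (W1_le_sum_putPotential (hμ n) hν hu_mono hu_step M).trans_lt hn

end Convergence

/-! ### The Kellerer dilation -/

section OrderHull

variable {T : Set ℝ}

/-- The set of points lying between two points of `T`, that is `[inf T, sup T]` for closed `T`. -/
def orderHull (T : Set ℝ) : Set ℝ := {x | (∃ a ∈ T, a ≤ x) ∧ ∃ b ∈ T, x ≤ b}

lemma measurableSet_orderHull (T : Set ℝ) : MeasurableSet (orderHull T) :=
  ((upperClosure T).upper.ordConnected.inter (lowerClosure T).lower.ordConnected).measurableSet

/-- The largest point of the closed set `T` below `x`, if there is one. -/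
noncomputable def leftNearest (T : Set ℝ) (x : ℝ) : ℝ := sSup (T ∩ Iic x)

/-- The smallest point of the closed set `T` above `x`, if there is one. -/
noncomputable def rightNearest (T : Set ℝ) (x : ℝ) : ℝ := sInf (T ∩ Ici x)

lemma monotoneOn_leftNearest : MonotoneOn (leftNearest T) (orderHull T) := by
  rintro x ⟨⟨a, haT, hax⟩, -⟩ y - hxy
  exact csSup_le_csSup (bddAbove_Iic.mono inter_subset_right) ⟨a, haT, hax⟩
    (inter_subset_inter_right _ (Iic_subset_Iic.2 hxy))

lemma monotoneOn_rightNearest : MonotoneOn (rightNearest T) (orderHull T) := by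
  rintro x - y ⟨-, b, hbT, hyb⟩ hxy
  exact csInf_le_csInf (bddBelow_Ici.mono inter_subset_right) ⟨b, hbT, hyb⟩
    (inter_subset_inter_right _ (Ici_subset_Ici.2 hxy))

/-- `(l, u)` is a bounded gap of `T`: its endpoints lie in `T` and no point of `T` lies between
them. -/
structure IsGap (T : Set ℝ) (l u : ℝ) : Prop where
  left_mem : l ∈ T
  right_mem : u ∈ T
  lt : l < u
  le_or_ge : ∀ t ∈ T, t ≤ l ∨ u ≤ t

lemma isGap_nearest (hT : IsClosed T) {x : ℝ} (hx : x ∈ orderHull T) (hxT : x ∉ T) :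
    IsGap T (leftNearest T x) (rightNearest T x) ∧
      x ∈ Ioo (leftNearest T x) (rightNearest T x) := by
  obtain ⟨⟨a, haT, hax⟩, b, hbT, hxb⟩ := hx
  have hbelow : BddAbove (T ∩ Iic x) := bddAbove_Iic.mono inter_subset_right
  have habove : BddBelow (T ∩ Ici x) := bddBelow_Ici.mono inter_subset_right
  obtain ⟨hlT, hlx⟩ : leftNearest T x ∈ T ∩ Iic x :=
    (hT.inter isClosed_Iic).csSup_mem ⟨a, haT, hax⟩ hbelow
  obtain ⟨huT, hxu⟩ : rightNearest T x ∈ T ∩ Ici x :=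
    (hT.inter isClosed_Ici).csInf_mem ⟨b, hbT, hxb⟩ habove
  have hlx' : leftNearest T x < x := lt_of_le_of_ne hlx (ne_of_mem_of_not_mem hlT hxT)
  have hxu' : x < rightNearest T x := lt_of_le_of_ne hxu (ne_of_mem_of_not_mem huT hxT).symm
  refine ⟨⟨hlT, huT, hlx'.trans hxu', fun t ht => ?_⟩, hlx', hxu'⟩
  exact (le_total t x).imp (fun htx => le_csSup hbelow ⟨ht, htx⟩)
    fun hxt => csInf_le habove ⟨ht, hxt⟩

/-- `f` coincides on every bounded gap of `T` with the affine interpolation of its values at the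
endpoints. -/
def AffineOnGaps (T : Set ℝ) (f : ℝ → ℝ) : Prop :=
  ∀ ⦃l u : ℝ⦄, IsGap T l u → ∀ x ∈ Icc l u,
    f x = (u - x) / (u - l) * f l + (x - l) / (u - l) * f u

lemma affineOnGaps_of_forall_exists {f : ℝ → ℝ}
    (hf : ∀ ⦃l u : ℝ⦄, IsGap T l u → ∃ c m : ℝ, ∀ x ∈ Icc l u, f x = c + m * x) :
    AffineOnGaps T f := by
  intro l u hgap x hx
  obtain ⟨c, m, hcm⟩ := hf hgap
  have hne : u - l ≠ 0 := (sub_pos.2 hgap.lt).ne'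
  rw [hcm x hx, hcm l (left_mem_Icc.2 hgap.lt.le), hcm u (right_mem_Icc.2 hgap.lt.le)]
  field_simp
  ring

lemma affineOnGaps_const (T : Set ℝ) (c : ℝ) : AffineOnGaps T fun _ => c :=
  affineOnGaps_of_forall_exists fun _ _ _ => ⟨c, 0, fun _ _ => by ring⟩

lemma affineOnGaps_put {t : ℝ} (ht : t ∈ T) : AffineOnGaps T fun x => max (t - x) 0 :=
  affineOnGaps_of_forall_exists fun l u hgap => by
    rcases hgap.le_or_ge t ht with h | h
    · exact ⟨0, 0, fun x hx => by rw [max_eq_right (by linarith [hx.1])]; ring⟩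
    · exact ⟨t, -1, fun x hx => by rw [max_eq_left (by linarith [hx.2])]; ring⟩

lemma affineOnGaps_call {t : ℝ} (ht : t ∈ T) : AffineOnGaps T fun x => max (x - t) 0 :=
  affineOnGaps_of_forall_exists fun l u hgap => by
    rcases hgap.le_or_ge t ht with h | h
    · exact ⟨-t, 1, fun x hx => by rw [max_eq_left (by linarith [hx.1])]; ring⟩
    · exact ⟨0, 0, fun x hx => by rw [max_eq_right (by linarith [hx.2])]; ring⟩

end OrderHull

section KellererDilation

variable {T : Set ℝ}

lemma kellererDilation_of_mem {x : ℝ} (hx : x ∈ T) : kellererDilation T x = Measure.dirac x :=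
  if_pos hx

lemma kellererDilation_of_notMem {x : ℝ} (hx : x ∉ T) :
    kellererDilation T x =
      ENNReal.ofReal ((rightNearest T x - x) / (rightNearest T x - leftNearest T x)) •
          Measure.dirac (leftNearest T x) +
        ENNReal.ofReal ((x - leftNearest T x) / (rightNearest T x - leftNearest T x)) •
          Measure.dirac (rightNearest T x) :=
  if_neg hx

lemma ae_mem_kellererDilation (hT : IsClosed T) {x : ℝ} (hx : x ∈ orderHull T) :
    ∀ᵐ y ∂(kellererDilation T x), y ∈ T := by
  by_cases hxT : x ∈ T
  · rw [kellererDilation_of_mem hxT]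
    exact (ae_dirac_iff hT.measurableSet).2 hxT
  · obtain ⟨hgap, -⟩ := isGap_nearest hT hx hxT
    rw [kellererDilation_of_notMem hxT, ae_add_measure_iff]
    exact ⟨Measure.ae_smul_measure ((ae_dirac_iff hT.measurableSet).2 hgap.left_mem) _,
      Measure.ae_smul_measure ((ae_dirac_iff hT.measurableSet).2 hgap.right_mem) _⟩

lemma lintegral_kellererDilation (hT : IsClosed T) {x : ℝ} (hx : x ∈ orderHull T) {f : ℝ → ℝ}
    (hf : AffineOnGaps T f) (hf₀ : 0 ≤ f) :
    ∫⁻ y, ENNReal.ofReal (f y) ∂(kellererDilation T x) = ENNReal.ofReal (f x) := by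
  by_cases hxT : x ∈ T
  · rw [kellererDilation_of_mem hxT, lintegral_dirac]
  · obtain ⟨hgap, hlx, hxu⟩ := isGap_nearest hT hx hxT
    have hleft := div_nonneg (sub_nonneg.2 hxu.le) (sub_nonneg.2 hgap.lt.le)
    have hright := div_nonneg (sub_nonneg.2 hlx.le) (sub_nonneg.2 hgap.lt.le)
    rw [kellererDilation_of_notMem hxT, lintegral_add_measure, lintegral_smul_measure,
      lintegral_smul_measure, lintegral_dirac, lintegral_dirac, smul_eq_mul, smul_eq_mul,
      ← ENNReal.ofReal_mul hleft, ← ENNReal.ofReal_mul hright,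
      ← ENNReal.ofReal_add (mul_nonneg hleft (hf₀ _)) (mul_nonneg hright (hf₀ _)),
      hf hgap x ⟨hlx.le, hxu.le⟩]

variable (hT : IsClosed T) {η : Measure ℝ} (hη : ∀ᵐ x ∂η, x ∈ orderHull T)
include hη

lemma aemeasurable_of_monotoneOn_orderHull {f : ℝ → ℝ} (hf : MonotoneOn f (orderHull T)) :
    AEMeasurable f η := by
  rw [← Measure.restrict_eq_self_of_ae_mem hη]
  exact aemeasurable_restrict_of_monotoneOn (measurableSet_orderHull T) hf

include hT

lemma aemeasurable_kellererDilation : AEMeasurable (kellererDilation T) η := by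
  let twoPoint : ℝ × ℝ × ℝ → Measure ℝ := fun p => if p.1 ∈ T then Measure.dirac p.1 else
    ENNReal.ofReal ((p.2.2 - p.1) / (p.2.2 - p.2.1)) • Measure.dirac p.2.1 +
      ENNReal.ofReal ((p.1 - p.2.1) / (p.2.2 - p.2.1)) • Measure.dirac p.2.2
  have htwoPoint : Measurable twoPoint := by
    refine Measurable.ite (measurable_fst hT.measurableSet)
      (Measure.measurable_dirac.comp measurable_fst)
      (Measure.measurable_of_measurable_coe _ fun s hs => ?_)
    have hdirac : Measurable fun x : ℝ => Measure.dirac x s :=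
      (Measure.measurable_coe hs).comp Measure.measurable_dirac
    simp only [Measure.add_apply, Measure.smul_apply, smul_eq_mul]
    fun_prop
  exact htwoPoint.comp_aemeasurable (aemeasurable_id.prodMk
    ((aemeasurable_of_monotoneOn_orderHull hη monotoneOn_leftNearest).prodMk
      (aemeasurable_of_monotoneOn_orderHull hη monotoneOn_rightNearest)))

lemma ae_mem_bind_kellererDilation : ∀ᵐ y ∂(η.bind (kellererDilation T)), y ∈ T := by
  refine ae_iff.2 ((Measure.bind_apply hT.measurableSet.compl
    (aemeasurable_kellererDilation hT hη)).trans ?_)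
  rw [lintegral_eq_zero_iff']
  · filter_upwards [hη] with x hx using ae_iff.1 (ae_mem_kellererDilation hT hx)
  · exact (Measure.measurable_coe hT.measurableSet.compl).comp_aemeasurable
      (aemeasurable_kellererDilation hT hη)

lemma lintegral_bind_kellererDilation {f : ℝ → ℝ} (hfm : Measurable f) (hf : AffineOnGaps T f)
    (hf₀ : 0 ≤ f) :
    ∫⁻ y, ENNReal.ofReal (f y) ∂(η.bind (kellererDilation T)) = ∫⁻ x, ENNReal.ofReal (f x) ∂η := by
  rw [Measure.lintegral_bind (aemeasurable_kellererDilation hT hη) hfm.ennreal_ofReal.aemeasurable]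
  refine lintegral_congr_ae ?_
  filter_upwards [hη] with x hx using lintegral_kellererDilation hT hx hf hf₀

lemma isProbabilityMeasure_bind_kellererDilation [IsProbabilityMeasure η] :
    IsProbabilityMeasure (η.bind (kellererDilation T)) :=
  ⟨by
    simpa only [ENNReal.ofReal_one, lintegral_one, measure_univ] using
      lintegral_bind_kellererDilation hT hη measurable_const (affineOnGaps_const T 1)
        fun _ => zero_le_one⟩

lemma integral_bind_kellererDilation {f : ℝ → ℝ} (hfm : Measurable f) (hf : AffineOnGaps T f)
    (hf₀ : 0 ≤ f) : ∫ y, f y ∂(η.bind (kellererDilation T)) = ∫ x, f x ∂η := by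
  rw [integral_eq_lintegral_of_nonneg_ae (.of_forall hf₀) hfm.aestronglyMeasurable,
    lintegral_bind_kellererDilation hT hη hfm hf hf₀,
    ← integral_eq_lintegral_of_nonneg_ae (.of_forall hf₀) hfm.aestronglyMeasurable]

lemma putPotential_bind_kellererDilation {t : ℝ} (ht : t ∈ T) :
    putPotential (η.bind (kellererDilation T)) t = putPotential η t :=
  integral_bind_kellererDilation hT hη (by fun_prop) (affineOnGaps_put ht)
    fun _ => le_max_right _ _

lemma callPotential_bind_kellererDilation {t : ℝ} (ht : t ∈ T) :
    callPotential (η.bind (kellererDilation T)) t = callPotential η t :=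
  integral_bind_kellererDilation hT hη (by fun_prop) (affineOnGaps_call ht)
    fun _ => le_max_right _ _

lemma integrable_bind_kellererDilation {f : ℝ → ℝ} (hfm : Measurable f) (hf : AffineOnGaps T f)
    (hf₀ : 0 ≤ f) (hfη : Integrable f η) : Integrable f (η.bind (kellererDilation T)) := by
  rw [← lintegral_ofReal_ne_top_iff_integrable hfm.aestronglyMeasurable (.of_forall hf₀)] at hfη ⊢
  rwa [lintegral_bind_kellererDilation hT hη hfm hf hf₀]

variable [IsProbabilityMeasure η] (hηint : Integrable (fun x => x) η) (hne : T.Nonempty)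
include hηint hne

lemma integrable_id_bind_kellererDilation :
    Integrable (fun x => x) (η.bind (kellererDilation T)) := by
  obtain ⟨t, ht⟩ := hne
  have := isProbabilityMeasure_bind_kellererDilation hT hη
  have hput := integrable_bind_kellererDilation hT hη (by fun_prop) (affineOnGaps_put ht)
    (fun _ => le_max_right _ _) (integrable_put hηint t)
  have hcall := integrable_bind_kellererDilation hT hη (by fun_prop) (affineOnGaps_call ht)
    (fun _ => le_max_right _ _) (integrable_call hηint t)
  refine ((hcall.sub hput).add (integrable_const t)).congr (.of_forall fun x => ?_)
  simp only [Pi.add_apply, Pi.sub_apply, max_sub_zero_eq x t]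
  ring

lemma integral_id_bind_kellererDilation :
    ∫ x, x ∂(η.bind (kellererDilation T)) = ∫ x, x ∂η := by
  obtain ⟨t, ht⟩ := id hne
  have := isProbabilityMeasure_bind_kellererDilation hT hη
  have hcall := callPotential_bind_kellererDilation hT hη ht
  rw [callPotential_eq (integrable_id_bind_kellererDilation hT hη hηint hne),
    callPotential_eq hηint, putPotential_bind_kellererDilation hT hη ht, probReal_univ,
    probReal_univ] at hcall
  linarith

end KellererDilation

/-! ### Measures carried by a closed set -/

section CarriedBy

variable {T : Set ℝ}

lemma putPotential_eq_zero {μ : Measure ℝ} {b : ℝ} (h : ∀ᵐ x ∂μ, b ≤ x) : putPotential μ b = 0 :=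
  integral_eq_zero_of_ae (h.mono fun _ hx => max_eq_right (sub_nonpos.2 hx))

lemma callPotential_eq_zero {μ : Measure ℝ} {b : ℝ} (h : ∀ᵐ x ∂μ, x ≤ b) : callPotential μ b = 0 :=
  integral_eq_zero_of_ae (h.mono fun _ hx => max_eq_right (sub_nonpos.2 hx))

lemma affineOnGaps_putPotential {μ : Measure ℝ} [IsFiniteMeasure μ]
    (hμ : Integrable (fun x => x) μ) (hμT : ∀ᵐ x ∂μ, x ∈ T) :
    AffineOnGaps T (putPotential μ) := by
  intro l u hgap x hx
  rw [putPotential, putPotential, putPotential, ← integral_const_mul, ← integral_const_mul,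
    ← integral_add ((integrable_put hμ l).const_mul _) ((integrable_put hμ u).const_mul _)]
  exact integral_congr_ae (hμT.mono fun y hy => affineOnGaps_call hy hgap x hx)

theorem tendsto_W1_of_tendsto_putPotential_on {ι : Type*} {l : Filter ι} {μ : ι → Measure ℝ}
    {ν : Measure ℝ} [∀ i, IsProbabilityMeasure (μ i)] [IsProbabilityMeasure ν] (hT : IsClosed T)
    (hμ : ∀ i, Integrable (fun x => x) (μ i)) (hν : Integrable (fun x => x) ν)
    (hμT : ∀ i, ∀ᵐ x ∂(μ i), x ∈ T) (hνT : ∀ᵐ x ∂ν, x ∈ T)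
    (hput : ∀ t ∈ T, Tendsto (fun i => putPotential (μ i) t) l (𝓝 (putPotential ν t)))
    (hmean : Tendsto (fun i => ∫ x, x ∂(μ i)) l (𝓝 (∫ x, x ∂ν))) :
    Tendsto (fun i => W1 (μ i) ν) l (𝓝 0) := by
  refine tendsto_W1_of_tendsto_putPotential hμ hν (fun t => ?_) hmean
  by_cases hbelow : ∃ a ∈ T, a ≤ t; swap
  · push Not at hbelow
    have hzero {m : Measure ℝ} (hm : ∀ᵐ x ∂m, x ∈ T) : putPotential m t = 0 :=
      putPotential_eq_zero (hm.mono fun x hx => (hbelow x hx).le)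
    simp only [hzero (hμT _), hzero hνT, tendsto_const_nhds]
  by_cases habove : ∃ b ∈ T, t ≤ b; swap
  · push Not at habove
    have hmean_eq {m : Measure ℝ} [IsProbabilityMeasure m] (hm : Integrable (fun x => x) m)
        (hmT : ∀ᵐ x ∂m, x ∈ T) : putPotential m t = t - ∫ x, x ∂m := by
      have hcall := callPotential_eq hm t
      rw [callPotential_eq_zero (hmT.mono fun x hx => (habove x hx).le), probReal_univ] at hcall
      linarith
    simp only [hmean_eq (hμ _) (hμT _), hmean_eq hν hνT]
    exact hmean.const_sub t
  by_cases htT : t ∈ T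
  · exact hput t htT
  obtain ⟨hgap, htgap⟩ := isGap_nearest hT ⟨hbelow, habove⟩ htT
  have haffine {m : Measure ℝ} [IsProbabilityMeasure m] (hm : Integrable (fun x => x) m)
      (hmT : ∀ᵐ x ∂m, x ∈ T) := affineOnGaps_putPotential hm hmT hgap t (Ioo_subset_Icc_self htgap)
  simp only [haffine (hμ _) (hμT _), haffine hν hνT]
  exact ((hput _ hgap.left_mem).const_mul _).add ((hput _ hgap.right_mem).const_mul _)

end CarriedBy

section Support

lemma msupport_eq_support {α : Type*} [TopologicalSpace α] [MeasurableSpace α] (μ : Measure α) :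
    msupport μ = μ.support :=
  Set.ext fun x => by
    simp only [msupport, Measure.support_eq_forall_isOpen, mem_ofPred_eq]
    exact forall_congr' fun _ => imp.swap

lemma isClosed_msupport {α : Type*} [TopologicalSpace α] [MeasurableSpace α] (μ : Measure α) :
    IsClosed (msupport μ) :=
  msupport_eq_support μ ▸ Measure.isClosed_support

lemma ae_mem_msupport {α : Type*} [TopologicalSpace α] [HereditarilyLindelofSpace α]
    [MeasurableSpace α] (μ : Measure α) : ∀ᵐ x ∂μ, x ∈ msupport μ :=
  msupport_eq_support μ ▸ Measure.support_mem_ae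

lemma msupport_subset_of_isClosed {α : Type*} [TopologicalSpace α] [MeasurableSpace α]
    {μ : Measure α} {F : Set α} (hF : IsClosed F) (h : ∀ᵐ x ∂μ, x ∈ F) : msupport μ ⊆ F :=
  msupport_eq_support μ ▸ Measure.support_subset_of_isClosed hF h

variable {μ : Measure ℝ} [IsFiniteMeasure μ] (hμ : Integrable (fun x => x) μ)
include hμ

lemma ae_ge_of_putPotential_eq_zero {b : ℝ} (h : putPotential μ b = 0) : ∀ᵐ x ∂μ, b ≤ x := by
  have hzero := (integral_eq_zero_iff_of_nonneg (fun _ => le_max_right _ _)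
    (integrable_put hμ b)).1 h
  filter_upwards [hzero] with x hx using sub_nonpos.1 (max_eq_right_iff.1 hx)

lemma ae_le_of_callPotential_eq_zero {b : ℝ} (h : callPotential μ b = 0) : ∀ᵐ x ∂μ, x ≤ b := by
  have hzero := (integral_eq_zero_iff_of_nonneg (fun _ => le_max_right _ _)
    (integrable_call hμ b)).1 h
  filter_upwards [hzero] with x hx using sub_nonpos.1 (max_eq_right_iff.1 hx)

lemma msupport_subset_orderHull {T : Set ℝ} (hT : IsClosed T) (hne : T.Nonempty)
    (hlower : ∀ b ∈ lowerBounds T, putPotential μ b = 0)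
    (hupper : ∀ b ∈ upperBounds T, callPotential μ b = 0) : msupport μ ⊆ orderHull T := by
  intro x hx
  constructor
  · by_contra! hlt
    have hbdd : BddBelow T := ⟨x, fun y hy => (hlt y hy).le⟩
    have hge := ae_ge_of_putPotential_eq_zero hμ
      (hlower (sInf T) fun y hy => csInf_le hbdd hy)
    exact (hlt _ (hT.csInf_mem hne hbdd)).not_ge
      (msupport_subset_of_isClosed isClosed_Ici hge hx)
  · by_contra! hgt
    have hbdd : BddAbove T := ⟨x, fun y hy => (hgt y hy).le⟩
    have hle := ae_le_of_callPotential_eq_zero hμ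
      (hupper (sSup T) fun y hy => le_csSup hbdd hy)
    exact (hgt _ (hT.csSup_mem hne hbdd)).not_ge
      (msupport_subset_of_isClosed isClosed_Iic hle hx)

end Support

/-! ### Limits of shadows -/

section Limit

variable {ι : Type*} {l : Filter ι} {η S : ι → Measure ℝ} [∀ i, IsProbabilityMeasure (η i)]
  (hη : ∀ i, Integrable (fun x => x) (η i))
include hη

theorem msupport_subset_orderHull_of_tendsto_W1 [l.NeBot] {ηlim : Measure ℝ}
    [IsProbabilityMeasure ηlim] (hηlim : Integrable (fun x => x) ηlim)
    (h : Tendsto (fun i => W1 (η i) ηlim) l (𝓝 0)) [∀ i, IsProbabilityMeasure (S i)]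
    (hS : ∀ i, Integrable (fun x => x) (S i)) (hηS : ∀ i, ConvexOrder (η i) (S i))
    {T : Set ℝ} (hT : IsClosed T) (hne : T.Nonempty) (hST : ∀ i, ∀ᵐ x ∂(S i), x ∈ T) :
    msupport ηlim ⊆ orderHull T := by
  have hput := tendsto_putPotential_of_tendsto_W1 hη hηlim h
  refine msupport_subset_orderHull hηlim hT hne (fun b hb => ?_) fun b hb => ?_
  · refine tendsto_nhds_unique (hput b) (tendsto_const_nhds.congr fun i => ?_)
    refine (putPotential_nonneg _ _).antisymm
      (((hηS i).putPotential_le (hη i) (hS i) b).trans_eq ?_)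
    exact putPotential_eq_zero ((hST i).mono fun x hx => hb hx)
  · refine tendsto_nhds_unique (tendsto_callPotential_of_tendsto_putPotential hη hηlim (hput b)
      (tendsto_integral_of_tendsto_W1 LipschitzWith.id hη hηlim h))
      (tendsto_const_nhds.congr fun i => ?_)
    refine (callPotential_nonneg _ _).antisymm
      (((hηS i).callPotential_le (hη i) (hS i) b).trans_eq ?_)
    exact callPotential_eq_zero ((hST i).mono fun x hx => hb hx)

theorem tendsto_putPotential_of_isShadow {ν : ι → Measure ℝ} [∀ i, IsFiniteMeasure (ν i)]
    (hν : ∀ i, Integrable (fun x => x) (ν i)) (hS : ∀ i, IsShadow (η i) (ν i) (S i)) {t p : ℝ}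
    (hmass : ∀ δ > 0, Tendsto (fun i => (ν i).real (Ioc (t - δ) (t + δ))) l atTop)
    (hput : Tendsto (fun i => putPotential (η i) t) l (𝓝 p)) :
    Tendsto (fun i => putPotential (S i) t) l (𝓝 p) := by
  refine tendsto_order.2 ⟨fun c hc => ?_, fun c hc => ?_⟩
  · filter_upwards [hput.eventually_const_lt hc] with i hi
    have := (hS i).isProbabilityMeasure
    exact hi.trans_le ((hS i).1.putPotential_le (hη i) ((hS i).integrable_id (hν i)) t)
  · set δ := (c - p) / 3
    have hδ : 0 < δ := div_pos (sub_pos.2 hc) three_pos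
    filter_upwards [hput.eventually_lt_const (lt_add_of_pos_right p hδ),
      (hmass δ hδ).eventually_ge_atTop 2] with i hi hi_mass
    have hle := (hS i).putPotential_le (hη i) (hν i) hδ.le
      (by rwa [probReal_univ, mul_one])
    rw [probReal_univ] at hle
    linarith [show c = p + 3 * δ by ring]

end Limit

lemma tendsto_smul_measureReal_Ioc_atTop {ι : Type*} {l : Filter ι} {H : ι → NNReal}
    (hH : Tendsto H l atTop) {υ : Measure ℝ} [IsFiniteMeasure υ] {t : ℝ} (ht : t ∈ msupport υ)
    {δ : ℝ} (hδ : 0 < δ) :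
    Tendsto (fun i => ((H i : ENNReal) • υ).real (Ioc (t - δ) (t + δ))) l atTop := by
  have hpos : 0 < υ.real (Ioc (t - δ) (t + δ)) :=
    ENNReal.toReal_pos ((ht _ isOpen_Ioo ⟨by linarith, by linarith⟩).trans_le
      (measure_mono Ioo_subset_Ioc_self)).ne' (measure_ne_top _ _)
  simp only [measureReal_ennreal_smul_apply, ENNReal.coe_toReal]
  exact (NNReal.tendsto_coe_atTop.2 hH).atTop_mul_const hpos

lemma ae_mem_msupport_of_le_smul {μ υ : Measure ℝ} {c : ENNReal} (h : μ ≤ c • υ) :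
    ∀ᵐ x ∂μ, x ∈ msupport υ :=
  ae_mono h (Measure.ae_smul_measure (ae_mem_msupport υ) c)

/-- If `η_n → η` in Wasserstein-1 distance, `H_n → ∞` and `η_n ≤_{c,+} H_n·υ`, then the
shadows `S^{H_n υ}(η_n)` converge in Wasserstein-1 distance to `η P_T` where `T = supp υ`,
and `supp η ⊆ [inf T, sup T]`. -/
theorem shadow_tendsto_kellerer (η : ℕ → Measure ℝ) (ηlim : Measure ℝ)
    [∀ n, IsProbabilityMeasure (η n)] [IsProbabilityMeasure ηlim]
    (hint : ∀ n, Integrable (fun x : ℝ => x) (η n))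
    (hintlim : Integrable (fun x : ℝ => x) ηlim)
    (hconv : Filter.Tendsto (fun n => W1 (η n) ηlim) Filter.atTop (nhds 0))
    (H : ℕ → NNReal) (hH : Filter.Tendsto H Filter.atTop Filter.atTop)
    (υ : Measure ℝ) [IsFiniteMeasure υ] (hυ : Integrable (fun x : ℝ => x) υ)
    (hdom : ∀ n, ConvexPlusOrder (η n) ((H n : ENNReal) • υ))
    (S : ℕ → Measure ℝ) (hS : ∀ n, IsShadow (η n) ((H n : ENNReal) • υ) (S n)) :
    Filter.Tendsto (fun n => W1 (S n) (ηlim.bind (kellererDilation (msupport υ))))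
        Filter.atTop (nhds 0) ∧
      ∀ x ∈ msupport ηlim,
        (∃ a ∈ msupport υ, a ≤ x) ∧ ∃ b ∈ msupport υ, x ≤ b := by
  have hT := isClosed_msupport υ
  have (n : ℕ) : IsFiniteMeasure ((H n : ENNReal) • υ) := υ.smul_finite ENNReal.coe_ne_top
  have hHυ (n : ℕ) := hυ.smul_measure (ENNReal.coe_ne_top (r := H n))
  have hSprob (n : ℕ) := (hS n).isProbabilityMeasure
  have hSint (n : ℕ) := (hS n).integrable_id (hHυ n)
  have hST (n : ℕ) := ae_mem_msupport_of_le_smul (hS n).2.1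
  have hne : (msupport υ).Nonempty := (hST 0).exists
  have hsupp := msupport_subset_orderHull_of_tendsto_W1 hint hintlim hconv hSint
    (fun n => (hS n).1) hT hne hST
  refine ⟨?_, hsupp⟩
  have hhull := (ae_mem_msupport ηlim).mono hsupp
  have := isProbabilityMeasure_bind_kellererDilation hT hhull
  refine tendsto_W1_of_tendsto_putPotential_on hT hSint
    (integrable_id_bind_kellererDilation hT hhull hintlim hne) hST
    (ae_mem_bind_kellererDilation hT hhull) (fun t ht => ?_) ?_
  · rw [putPotential_bind_kellererDilation hT hhull ht]
    exact tendsto_putPotential_of_isShadow hint hHυ hS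
      (fun _ => tendsto_smul_measureReal_Ioc_atTop hH ht)
      (tendsto_putPotential_of_tendsto_W1 hint hintlim hconv t)
  · rw [integral_id_bind_kellererDilation hT hhull hintlim hne]
    simp only [← (hS _).1.integral_id_eq (hint _) (hSint _)]
    exact tendsto_integral_of_tendsto_W1 LipschitzWith.id hint hintlim hconv
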